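/- arXiv:2605.04935 — 3 statements merged into one kernel-verified Lean document; each statement's English description precedes it below -/
import Mathlib

section
/- Let p be a prime and w = (a_0,…,a_5) ∈ V_5 a nonzero element. If the catalecticant covariant Cat_{2,2}(x,y:w) is not the zero cubic form, then there exists an integer C with |C| ≤ 4 such that S(w) = C·p². -/
open Finset

/-- Multiplication of binary forms encoded by coefficient tuples: a binary form
`∑ i, f i • x^(a-i) * y^i` of degree `a` is encoded as the tuple `f : Fin (a+1) → k`,
and multiplication of forms is convolution of coefficient tuples. -/
def formMul {k : Type*} [CommRing k] {a b : ℕ} (f : Fin (a + 1) → k)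
    (g : Fin (b + 1) → k) : Fin (a + b + 1) → k :=
  fun i => ∑ q : Fin (a + 1) × Fin (b + 1),
    if (q.1 : ℕ) + (q.2 : ℕ) = (i : ℕ) then f q.1 * g q.2 else 0

/-- The pairing `(w, v) = ∑ i, w i * v i` between `V_n` and `V_n^*`. -/
def pair {k : Type*} [CommRing k] {n : ℕ} (w v : Fin (n + 1) → k) : k :=
  ∑ i, w i * v i

/-- A binary quintic form is singular if it is nonzero and, over an algebraic closure,
it is divisible by the square of a nonzero linear form. -/
def IsSingularQuintic {k : Type*} [Field k] (v : Fin 6 → k) : Prop :=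
  v ≠ 0 ∧ ∃ (l : Fin 2 → AlgebraicClosure k) (c : Fin 4 → AlgebraicClosure k),
    l ≠ 0 ∧
    (fun i => algebraMap k (AlgebraicClosure k) (v i)) = formMul (formMul l l) c

open scoped Classical in
/-- The exponential sum `S(w)` over binary quintic forms that are zero or singular. -/
noncomputable def expSum (p : ℕ) [Fact p.Prime] (w : Fin 6 → ZMod p) : ℂ :=
  ∑ v : Fin 6 → ZMod p,
    if v = 0 ∨ IsSingularQuintic v then
      Complex.exp (2 * Real.pi * Complex.I * ((pair w v).val : ℂ) / (p : ℂ))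
    else 0

/-- The catalecticant covariant `Cat_{2,2}(x,y:w) = det (x•A₁ - y•A₀)`, a binary cubic
form, regarded as a polynomial in the two variables `x = X 0` and `y = X 1`. -/
noncomputable def cat22 {k : Type*} [CommRing k] (w : Fin 6 → k) :
    MvPolynomial (Fin 2) k :=
  Matrix.det (Matrix.of fun i j : Fin 3 =>
    MvPolynomial.X 0 * MvPolynomial.C (w ⟨(i : ℕ) + (j : ℕ) + 1, by omega⟩) -
    MvPolynomial.X 1 * MvPolynomial.C (w ⟨(i : ℕ) + (j : ℕ), by omega⟩))

open Polynomial in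
/-- The dehomogenization `v(1, X)` of a binary form. -/
noncomputable def dehomogenize {k : Type*} [CommRing k] {n : ℕ} (v : Fin (n + 1) → k) : k[X] :=
  ∑ i, C (v i) * X ^ (i : ℕ)

section Dehomogenize

open Polynomial

variable {k : Type*} [CommRing k]

lemma coeff_dehomogenize {n : ℕ} (v : Fin (n + 1) → k) (i : Fin (n + 1)) :
    (dehomogenize v).coeff i = v i := by
  simp [dehomogenize, finsetSum_coeff, coeff_C_mul, coeff_X_pow, Fin.val_inj]

lemma natDegree_dehomogenize_le {n : ℕ} (v : Fin (n + 1) → k) :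
    (dehomogenize v).natDegree ≤ n :=
  natDegree_sum_le_of_forall_le _ _ fun i _ =>
    (natDegree_C_mul_X_pow_le _ _).trans (Nat.lt_succ_iff.mp i.2)

lemma dehomogenize_injective {n : ℕ} :
    Function.Injective (dehomogenize : (Fin (n + 1) → k) → k[X]) := fun v w h => by
  ext i
  rw [← coeff_dehomogenize v, h, coeff_dehomogenize]

lemma exists_dehomogenize_eq {n : ℕ} {f : k[X]} (hf : f.natDegree ≤ n) :
    ∃ v : Fin (n + 1) → k, dehomogenize v = f := by
  refine ⟨fun i => f.coeff i, ?_⟩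
  rw [dehomogenize, Fin.sum_univ_eq_sum_range (fun i => C (f.coeff i) * X ^ i) (n + 1),
    ← as_sum_range_C_mul_X_pow' f (Nat.lt_succ_of_le hf)]

lemma dehomogenize_formMul {a b : ℕ} (f : Fin (a + 1) → k) (g : Fin (b + 1) → k) :
    dehomogenize (formMul f g) = dehomogenize f * dehomogenize g := by
  rw [dehomogenize, dehomogenize, dehomogenize, Fintype.sum_mul_sum, ← Fintype.sum_prod_type']
  simp only [formMul, map_sum, Finset.sum_mul]
  rw [Finset.sum_comm]
  refine Finset.sum_congr rfl fun q _ => ?_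
  rw [Finset.sum_eq_single (⟨q.1 + q.2, by omega⟩ : Fin (a + b + 1))]
  · simp only [if_true, C_mul, pow_add]
    ring
  · intro i _ hi
    rw [if_neg fun h => hi (Fin.ext h.symm)]
    simp
  · simp

lemma dehomogenize_map {K : Type*} [CommRing K] (φ : k →+* K) {n : ℕ} (v : Fin (n + 1) → k) :
    dehomogenize (fun i => φ (v i)) = (dehomogenize v).map φ := by
  simp [dehomogenize, Polynomial.map_sum]

lemma dehomogenize_zero {n : ℕ} : dehomogenize (0 : Fin (n + 1) → k) = 0 := by
  simp [dehomogenize]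

lemma dehomogenize_eq_zero_iff {n : ℕ} {v : Fin (n + 1) → k} : dehomogenize v = 0 ↔ v = 0 := by
  rw [← dehomogenize_zero (n := n), dehomogenize_injective.eq_iff]

lemma dehomogenize_linear (l : Fin 2 → k) :
    dehomogenize (n := 1) l = C (l 1) * X + C (l 0) := by
  simp [dehomogenize, Fin.sum_univ_two, add_comm]

lemma dehomogenize_quadratic (d : Fin 3 → k) :
    dehomogenize (n := 2) d = C (d 2) * X ^ 2 + C (d 1) * X + C (d 0) := by
  simp [dehomogenize, Fin.sum_univ_three]
  ring

/-- Divisibility of forms in terms of dehomogenizations: the degree bound is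
divisibility at infinity. -/
lemma exists_eq_formMul_iff [IsDomain k] {a b : ℕ} {e : Fin (a + 1) → k} (he : e ≠ 0)
    (v : Fin (a + b + 1) → k) :
    (∃ c : Fin (b + 1) → k, v = formMul e c) ↔
      dehomogenize e ∣ dehomogenize v ∧
        (dehomogenize v).natDegree ≤ (dehomogenize e).natDegree + b := by
  have he' : dehomogenize e ≠ 0 := fun h => he (dehomogenize_eq_zero_iff.mp h)
  constructor
  · rintro ⟨c, rfl⟩
    rw [dehomogenize_formMul]
    exact ⟨dvd_mul_right _ _,
      natDegree_mul_le.trans (Nat.add_le_add_left (natDegree_dehomogenize_le c) _)⟩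
  · rintro ⟨⟨g, hg⟩, hdeg⟩
    have hgb : g.natDegree ≤ b := by
      by_cases hg0 : g = 0
      · simp [hg0]
      · rw [hg, natDegree_mul he' hg0] at hdeg
        omega
    obtain ⟨c, rfl⟩ := exists_dehomogenize_eq hgb
    exact ⟨c, dehomogenize_injective (by rw [hg, dehomogenize_formMul])⟩

lemma dehomogenize_formMul_sq {a b : ℕ} (l : Fin (a + 1) → k) (c : Fin (b + 1) → k) :
    dehomogenize (formMul (formMul l l) c) = dehomogenize l ^ 2 * dehomogenize c := by
  rw [dehomogenize_formMul, dehomogenize_formMul, sq]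

lemma formMul_right_injective [IsDomain k] {a : ℕ} (b : ℕ) {e : Fin (a + 1) → k} (he : e ≠ 0) :
    Function.Injective (formMul e : (Fin (b + 1) → k) → _) := fun c c' h => by
  have h' := congrArg dehomogenize h
  rw [dehomogenize_formMul, dehomogenize_formMul] at h'
  exact dehomogenize_injective
    (mul_left_cancel₀ (fun h => he (dehomogenize_eq_zero_iff.mp h)) h')

lemma formMul_ne_zero [IsDomain k] {a b : ℕ} {e : Fin (a + 1) → k} {c : Fin (b + 1) → k}
    (he : e ≠ 0) (hc : c ≠ 0) : formMul e c ≠ 0 := by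
  rw [ne_eq, ← dehomogenize_eq_zero_iff] at he hc ⊢
  rw [dehomogenize_formMul]
  exact mul_ne_zero he hc

lemma formMul_add {a b : ℕ} (e : Fin (a + 1) → k) (c c' : Fin (b + 1) → k) :
    formMul e (c + c') = formMul e c + formMul e c' :=
  dehomogenize_injective <| by
    have hadd {n : ℕ} (v v' : Fin (n + 1) → k) :
        dehomogenize (v + v') = dehomogenize v + dehomogenize v' := by
      simp [dehomogenize, add_mul, Finset.sum_add_distrib]
    simp only [hadd, dehomogenize_formMul, mul_add]

lemma exists_eq_formMul_sq_iff [IsDomain k] {a b : ℕ} {l : Fin (a + 1) → k} (hl : l ≠ 0)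
    (v : Fin (a + a + b + 1) → k) :
    (∃ c : Fin (b + 1) → k, v = formMul (formMul l l) c) ↔
      dehomogenize l ^ 2 ∣ dehomogenize v ∧
        (dehomogenize v).natDegree ≤ 2 * (dehomogenize l).natDegree + b := by
  rw [exists_eq_formMul_iff (formMul_ne_zero hl hl), dehomogenize_formMul, ← sq, natDegree_pow]

end Dehomogenize

section Squarefree

open Polynomial

variable {k : Type*} [Field k]

lemma isSingularQuintic_iff [PerfectField k] (v : Fin 6 → k) :
    (v = 0 ∨ IsSingularQuintic v) ↔
      (dehomogenize (n := 5) v).natDegree ≤ 3 ∨ ¬ Squarefree (dehomogenize (n := 5) v) := by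
  set f := dehomogenize (n := 5) v with hf
  set K := AlgebraicClosure k
  have hmap : dehomogenize (n := 5) (fun i => algebraMap k K (v i)) = f.map (algebraMap k K) :=
    dehomogenize_map _ _
  constructor
  · rintro (rfl | ⟨-, l, c, hl, h⟩)
    · left
      simp [hf, dehomogenize_zero (n := 5)]
    · have h' : f.map (algebraMap k K) =
          dehomogenize (n := 1) l ^ 2 * dehomogenize (n := 3) c := by
        rw [← hmap, h]
        exact dehomogenize_formMul_sq (a := 1) (b := 3) l c
      by_cases hl1 : l 1 = 0
      · left
        rw [← natDegree_map (algebraMap k K), h', dehomogenize_linear, hl1]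
        have := natDegree_dehomogenize_le (n := 3) c
        simp only [map_zero, zero_mul, zero_add, ← C_pow]
        exact (natDegree_C_mul_le _ _).trans this
      · right
        intro hsq
        have hsep := (PerfectField.separable_iff_squarefree.mpr hsq).map (f := algebraMap k K)
        have hu := hsep.squarefree (dehomogenize (n := 1) l) (by
          rw [h', ← sq]
          exact dvd_mul_right _ _)
        have := natDegree_eq_zero_of_isUnit hu
        rw [dehomogenize_linear, natDegree_linear hl1] at this
        omega
  · intro h
    by_cases hv : v = 0
    · exact Or.inl hv
    refine Or.inr ⟨hv, ?_⟩
    have key : ∃ l : Fin 2 → K, l ≠ 0 ∧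
        ∃ c : Fin 4 → K, (fun i => algebraMap k K (v i)) = formMul (formMul l l) c := by
      have hdeg : f.natDegree ≤ 5 := natDegree_dehomogenize_le (n := 5) v
      have hred (l : Fin 2 → K) (hl : l ≠ 0)
          (hd : dehomogenize (n := 1) l ^ 2 ∣ f.map (algebraMap k K))
          (hn : f.natDegree ≤ 2 * (dehomogenize (n := 1) l).natDegree + 3) :
          ∃ c : Fin 4 → K, (fun i => algebraMap k K (v i)) = formMul (formMul l l) c := by
        rw [← natDegree_map (algebraMap k K)] at hn
        rw [← hmap] at hd hn
        exact (exists_eq_formMul_sq_iff (a := 1) (b := 3) hl _).mpr ⟨hd, hn⟩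
      rcases h with h | h
      · refine ⟨![1, 0], fun h => by simpa using congrFun h 0, hred _ (fun h => by
          simpa using congrFun h 0) ?_ ?_⟩
        · simp [dehomogenize_linear]
        · simpa [dehomogenize_linear] using h
      · simp only [Squarefree, not_forall] at h
        obtain ⟨g, hg, hgu⟩ := h
        have hf0 : f ≠ 0 := fun h0 => hv (dehomogenize_eq_zero_iff.mp h0)
        have hg0 : g ≠ 0 := by rintro rfl; simp at hg; exact hf0 hg
        obtain ⟨α, hα⟩ := IsAlgClosed.exists_root (g.map (algebraMap k K)) (by
          rw [degree_map]
          exact fun h0 => hgu (isUnit_iff_degree_eq_zero.mpr h0))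
        have hdvd := dvd_iff_isRoot.mpr hα
        have e2 : dehomogenize (n := 1) ![-α, 1] = X - C α := by
          simp [dehomogenize_linear, sub_eq_add_neg]
        have hl : (![-α, 1] : Fin 2 → K) ≠ 0 := fun h => by simpa using congrFun h 1
        refine ⟨![-α, 1], hl, hred _ hl ?_ ?_⟩
        · rw [e2, sq]
          refine (mul_dvd_mul hdvd hdvd).trans ?_
          rw [← Polynomial.map_mul]
          exact Polynomial.map_dvd _ hg
        · rw [e2, natDegree_X_sub_C]
          omega
    obtain ⟨l, hl, c, hc⟩ := key
    exact ⟨l, c, hl, hc⟩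

lemma exists_sq_mul_squarefree {f : k[X]} (hf : f ≠ 0) :
    ∃ e h : k[X], e.Monic ∧ Squarefree h ∧ f = e ^ 2 * h := by
  by_cases hsq : Squarefree f
  · exact ⟨1, f, monic_one, hsq, by simp⟩
  · simp only [Squarefree, not_forall] at hsq
    obtain ⟨g, ⟨q, hq⟩, hgu⟩ := hsq
    have hg0 : g ≠ 0 := by rintro rfl; simp at hq; exact hf hq
    have hq0 : q ≠ 0 := by rintro rfl; simp at hq; exact hf hq
    have hgd : 0 < g.natDegree := Nat.pos_of_ne_zero fun h0 =>
      hgu (isUnit_iff_degree_eq_zero.mpr (by rw [degree_eq_natDegree hg0, h0]; rfl))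
    have hlt : q.natDegree < f.natDegree := by
      rw [hq, natDegree_mul (mul_ne_zero hg0 hg0) hq0, natDegree_mul hg0 hg0]
      omega
    obtain ⟨e, h, he, hh, rfl⟩ := exists_sq_mul_squarefree hq0
    have hlc : g.leadingCoeff ≠ 0 := leadingCoeff_ne_zero.mpr hg0
    refine ⟨C g.leadingCoeff⁻¹ * g * e, C (g.leadingCoeff ^ 2) * h, ?_, ?_, ?_⟩
    · refine Monic.mul ?_ he
      rw [mul_comm]
      exact monic_mul_leadingCoeff_inv hg0
    · have hu : IsUnit (C (g.leadingCoeff ^ 2)) :=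
        (isUnit_iff_ne_zero.mpr (pow_ne_zero 2 hlc)).map C
      exact (associated_unit_mul_left h _ hu).symm.squarefree_iff.mp hh
    · have hc : (C g.leadingCoeff : k[X]) * C g.leadingCoeff⁻¹ = 1 := by
        rw [← C_mul, mul_inv_cancel₀ hlc, C_1]
      rw [hq, C_pow]
      linear_combination (-(g * g * e ^ 2 * h) *
        (C g.leadingCoeff * C g.leadingCoeff⁻¹ + 1)) * hc
termination_by f.natDegree

lemma dvd_of_sq_dvd_sq_mul_squarefree {d e h : k[X]} (he : e ≠ 0) (hh : Squarefree h)
    (hd : d ^ 2 ∣ e ^ 2 * h) : d ∣ e := by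
  classical
  let _ := EuclideanDomain.gcdMonoid k[X]
  obtain ⟨d', hd'⟩ := gcd_dvd_left d e
  obtain ⟨e', he'⟩ := gcd_dvd_right d e
  have hg : gcd d e ≠ 0 := gcd_ne_zero_of_right he
  have hcop : IsCoprime d' e' := (gcd_isUnit_iff _ _).mp (isUnit_gcd_of_eq_mul_gcd hd' he' hg)
  have h1 : gcd d e ^ 2 * d' ^ 2 ∣ gcd d e ^ 2 * (e' ^ 2 * h) := by
    rw [← mul_pow, ← mul_assoc, ← mul_pow, ← hd', ← he']
    exact hd
  have h2 : d' ^ 2 ∣ h :=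
    (hcop.pow (m := 2) (n := 2)).dvd_of_dvd_mul_left
      ((mul_dvd_mul_iff_left (pow_ne_zero 2 hg)).mp h1)
  have hu : IsUnit d' := hh d' (by rwa [← sq])
  rw [hd']
  exact (hu.mul_right_dvd).mpr (gcd_dvd_right d e)

end Squarefree

section Sieve

open Polynomial

variable {k : Type*} [Field k]

/-- The monic quadratic polynomial `X² + bX + c`. -/
noncomputable def monicQuadratic (q : k × k) : k[X] := X ^ 2 + C q.1 * X + C q.2

lemma natDegree_monicQuadratic (q : k × k) : (monicQuadratic q).natDegree = 2 := by
  rw [monicQuadratic]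
  compute_degree!

lemma monic_monicQuadratic (q : k × k) : (monicQuadratic q).Monic := by
  rw [monicQuadratic]
  monicity!

lemma isRoot_monicQuadratic (q : k × k) (t : k) :
    (monicQuadratic q).IsRoot t ↔ t ^ 2 + q.1 * t + q.2 = 0 := by
  simp [monicQuadratic]

lemma monicQuadratic_eq_iff {e : k[X]} (he : e.Monic) (hdeg : e.natDegree = 2) (q : k × k) :
    monicQuadratic q = e ↔ q = (e.coeff 1, e.coeff 0) := by
  constructor
  · rintro rfl
    ext <;> simp [monicQuadratic, coeff_X]
  · rintro rfl
    conv_rhs => rw [he.as_sum, hdeg]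
    simp [monicQuadratic, Finset.sum_range_succ]
    ring

variable [Fintype k] [DecidableEq k]

/-- The number of roots of `X² + bX + c`. -/
def numRoots (q : k × k) : ℕ := #{t : k | t ^ 2 + q.1 * t + q.2 = 0}

lemma numRoots_le_two (q : k × k) : numRoots q ≤ 2 := by
  classical
  have h0 := (monic_monicQuadratic q).ne_zero
  calc numRoots q ≤ (monicQuadratic q).roots.toFinset.card := by
        refine Finset.card_le_card fun t ht => ?_
        rw [Multiset.mem_toFinset, mem_roots h0, isRoot_monicQuadratic]
        simpa using ht
    _ ≤ _ := (Multiset.toFinset_card_le _).trans (card_roots' _)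
    _ = 2 := natDegree_monicQuadratic q

lemma sum_numRoots_sub_one : ∑ q : k × k, ((numRoots q : ℤ) - 1) = 0 := by
  have h : ∑ q : k × k, (numRoots q : ℤ) = ∑ _q : k × k, 1 := by
    simp only [numRoots, Finset.card_filter, Nat.cast_sum, Fintype.sum_prod_type]
    refine Finset.sum_congr rfl fun b _ => ?_
    rw [Finset.sum_comm]
    refine Finset.sum_congr rfl fun t _ => ?_
    rw [Finset.sum_eq_single (-(t ^ 2 + b * t))]
    · simp
    · intro c _ hc
      have : t ^ 2 + b * t + c ≠ 0 := fun h => hc (by linear_combination h)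
      simp [this]
    · simp
  rw [Finset.sum_sub_distrib, h, sub_self]

open scoped Classical in
/-- Inclusion–exclusion for the squares of linear and quadratic forms dividing a binary quintic
form, where the linear form `x` corresponds to a drop of degree. -/
lemma indicator_singular_eq {f : k[X]} (hf : f.natDegree ≤ 5) :
    (if f.natDegree ≤ 3 ∨ ¬ Squarefree f then 1 else 0 : ℤ) =
      (∑ t : k, if (X - C t) ^ 2 ∣ f then 1 else 0) + (if f.natDegree ≤ 3 then 1 else 0)
      - (∑ q : k × k, ((numRoots q : ℤ) - 1) * if monicQuadratic q ^ 2 ∣ f then 1 else 0)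
      - ∑ t : k, if (X - C t) ^ 2 ∣ f ∧ f.natDegree ≤ 3 then 1 else 0 := by
  by_cases hf0 : f = 0
  · have := sum_numRoots_sub_one (k := k)
    simp only [hf0, natDegree_zero, zero_le, true_or, if_true, dvd_zero, mul_one, this, and_self]
    ring
  obtain ⟨e, h, he, hh, rfl⟩ := exists_sq_mul_squarefree hf0
  have hdvd (d : k[X]) : d ^ 2 ∣ e ^ 2 * h ↔ d ∣ e :=
    ⟨dvd_of_sq_dvd_sq_mul_squarefree he.ne_zero hh,
      fun hd => (pow_dvd_pow_of_dvd hd 2).trans (dvd_mul_right _ _)⟩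
  have hdeg : (e ^ 2 * h).natDegree = 2 * e.natDegree + h.natDegree := by
    rw [natDegree_mul (pow_ne_zero 2 he.ne_zero) hh.ne_zero, natDegree_pow]
  have hsq : Squarefree (e ^ 2 * h) ↔ e.natDegree = 0 := by
    constructor
    · exact fun hs => natDegree_eq_zero_of_isUnit (hs e (by rw [← sq]; exact dvd_mul_right _ _))
    · intro h0
      rw [he.natDegree_eq_zero.mp h0]
      simpa using hh
  have hquad (h2 : e.natDegree ≠ 2) (q : k × k) : ¬ monicQuadratic q ∣ e := fun hd => by
    have := natDegree_le_of_dvd hd he.ne_zero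
    rw [natDegree_monicQuadratic] at this
    omega
  simp only [hdvd, dvd_iff_isRoot, hsq]
  rcases le_or_gt (e ^ 2 * h).natDegree 3 with h3 | h3
  · simp [h3, hquad (by omega)]
  simp only [h3.not_ge, false_or, and_false, if_false, Finset.sum_const_zero, sub_zero, add_zero]
  obtain h0 | h1 | h2 : e.natDegree = 0 ∨ e.natDegree = 1 ∨ e.natDegree = 2 := by omega
  · have hroot (t : k) : ¬ e.IsRoot t := by simp [he.natDegree_eq_zero.mp h0]
    simp only [hroot, hquad (by omega), h0]
    simp
  · have hroot (t : k) : e.IsRoot t ↔ t = -e.coeff 0 := by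
      rw [he.as_sum, h1]
      simp [eq_neg_iff_add_eq_zero]
    simp only [hroot, hquad (by omega), h1]
    simp
  · have hq (q : k × k) : monicQuadratic q ∣ e ↔ q = (e.coeff 1, e.coeff 0) := by
      rw [← monicQuadratic_eq_iff he h2]
      constructor
      · exact fun hd => (eq_of_monic_of_dvd_of_natDegree_le (monic_monicQuadratic q) he hd
          (by rw [natDegree_monicQuadratic, h2])).symm
      · rintro rfl
        exact dvd_rfl
    have hroots : (∑ t : k, if e.IsRoot t then 1 else 0 : ℤ) =
        numRoots (e.coeff 1, e.coeff 0) := by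
      have hroot (t : k) : t ^ 2 + e.coeff 1 * t + e.coeff 0 = 0 ↔ e.IsRoot t := by
        rw [← isRoot_monicQuadratic (e.coeff 1, e.coeff 0),
          (monicQuadratic_eq_iff he h2 _).mpr rfl]
      simp only [numRoots, hroot, Finset.card_filter, Nat.cast_sum, Nat.cast_ite, Nat.cast_one,
        Nat.cast_zero]
    simp only [hroots, hq, h2]
    simp

end Sieve

section Catalecticant

variable {k : Type*} [Field k]

/-- The Hankel matrix `(a (i + j + s))` attached to a sextuple `a`. -/
def hankel (a : Fin 6 → k) (s : Fin 2) : Matrix (Fin 3) (Fin 3) k :=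
  Matrix.of fun i j => a ⟨i + j + s, by omega⟩

/-- The pencil of matrices whose determinant is the catalecticant covariant. -/
noncomputable def hankelPencil (a : Fin 6 → k) :
    Matrix (Fin 3) (Fin 3) (MvPolynomial (Fin 2) k) :=
  MvPolynomial.X (R := k) (0 : Fin 2) • (hankel a 1).map MvPolynomial.C -
    MvPolynomial.X (R := k) (1 : Fin 2) • (hankel a 0).map MvPolynomial.C

lemma cat22_eq_det (a : Fin 6 → k) : cat22 a = (hankelPencil a).det := by
  rw [cat22]
  congr 1

open Matrix

lemma cat22_eq_zero_of_mulVec {a : Fin 6 → k} {e : Fin 3 → k} (he : e ≠ 0)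
    (h : ∀ s, hankel a s *ᵥ e = 0) : cat22 a = 0 := by
  rw [cat22_eq_det, ← exists_mulVec_eq_zero_iff]
  refine ⟨fun i => MvPolynomial.C (e i), fun h0 => he (funext fun i => ?_), ?_⟩
  · exact MvPolynomial.C_injective _ _ ((congrFun h0 i).trans (map_zero _).symm)
  · have hmap (s : Fin 2) :
        (hankel a s).map MvPolynomial.C *ᵥ (fun i => MvPolynomial.C (σ := Fin 2) (e i)) = 0 := by
      ext1 i
      have := (MvPolynomial.C (σ := Fin 2)).map_mulVec (hankel a s) e i
      rw [h s] at this
      simpa [Function.comp_def] using this.symm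
    rw [hankelPencil, sub_mulVec, smul_mulVec, smul_mulVec, hmap, hmap]
    simp

lemma cat22_eq_zero_of_proportional {a : Fin 6 → k} {s t : k} (hst : s ≠ 0 ∨ t ≠ 0)
    (h : t • hankel a 0 = s • hankel a 1) : cat22 a = 0 := by
  have h' (i j : Fin 3) : t * a ⟨i + j, by omega⟩ = s * a ⟨i + j + 1, by omega⟩ :=
    congrFun (congrFun h i) j
  have h0 : t * a 0 = s * a 1 := h' 0 0
  have h1 : t * a 1 = s * a 2 := h' 0 1
  have h2 : t * a 2 = s * a 3 := h' 1 1
  have h3 : t * a 3 = s * a 4 := h' 1 2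
  refine cat22_eq_zero_of_mulVec (e := ![t, -s, 0]) (fun he => ?_) fun r => ?_
  · have ht : t = 0 := by simpa using congrFun he 0
    have hs : s = 0 := by simpa using congrFun he 1
    simp [hs, ht] at hst
  · ext i
    fin_cases r <;> fin_cases i <;>
      simp [hankel, mulVec, dotProduct, Fin.sum_univ_three] <;>
      first
      | linear_combination h0
      | linear_combination h1
      | linear_combination h2
      | linear_combination h3

/-- The value `uᵀ A_s v` of the bilinear form attached to a Hankel matrix. -/
def hankelForm (a : Fin 6 → k) (s : Fin 2) (u v : Fin 3 → k) : k := u ⬝ᵥ (hankel a s *ᵥ v)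

lemma hankelForm_comm (a : Fin 6 → k) (s : Fin 2) (u v : Fin 3 → k) :
    hankelForm a s u v = hankelForm a s v u := by
  have hsymm : (hankel a s)ᵀ = hankel a s := by
    ext i j
    simp [hankel, add_comm (i : ℕ)]
  rw [hankelForm, hankelForm, dotProduct_mulVec, ← mulVec_transpose, hsymm, dotProduct_comm]

lemma hankelForm_combination (a : Fin 6 → k) (s : Fin 2) (u v w : Fin 3 → k) (x y z : k) :
    hankelForm a s (x • u + y • v + z • w) (x • u + y • v + z • w) =
      x ^ 2 * hankelForm a s u u + y ^ 2 * hankelForm a s v v + z ^ 2 * hankelForm a s w w +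
      2 * (y * z * hankelForm a s v w + x * z * hankelForm a s u w +
        x * y * hankelForm a s u v) := by
  have h1 := hankelForm_comm a s v u
  have h2 := hankelForm_comm a s w u
  have h3 := hankelForm_comm a s w v
  simp only [hankelForm, mulVec_add, mulVec_smul, add_dotProduct, dotProduct_add, smul_dotProduct,
    dotProduct_smul, smul_eq_mul] at h1 h2 h3 ⊢
  rw [h1, h2, h3]
  ring

lemma mul_hankel_mul_transpose_apply (a : Fin 6 → k) (s : Fin 2) (D : Matrix (Fin 3) (Fin 3) k)
    (i j : Fin 3) : (D * hankel a s * Dᵀ) i j = hankelForm a s (D i) (D j) := by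
  rw [hankelForm, dotProduct_mulVec]
  rfl

/-- The determinant of the matrix with rows `u`, `v`, `w`. -/
def tripleDet (u v w : Fin 3 → k) : k := det (of ![u, v, w])

lemma tripleDet_eq (u v w : Fin 3 → k) : tripleDet u v w =
    u 0 * v 1 * w 2 - u 0 * v 2 * w 1 - u 1 * v 0 * w 2 + u 1 * v 2 * w 0 + u 2 * v 0 * w 1
      - u 2 * v 1 * w 0 := by
  rw [tripleDet, det_fin_three]
  simp

/-- A pencil of conics sharing a line is degenerate. -/
lemma cat22_eq_zero_of_isotropic {a : Fin 6 → k} {u v : Fin 3 → k} (huv : u ⨯₃ v ≠ 0)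
    (huu : ∀ s, hankelForm a s u u = 0) (hu : ∀ s, hankelForm a s u v = 0)
    (hvv : ∀ s, hankelForm a s v v = 0) : cat22 a = 0 := by
  obtain ⟨i, hi⟩ := Function.ne_iff.mp huv
  set D : Matrix (Fin 3) (Fin 3) k := of ![u, v, Pi.single i 1] with hD
  have hdet : D.det ≠ 0 := by
    have : D.det = (Pi.single i 1 : Fin 3 → k) ⬝ᵥ u ⨯₃ v := by
      rw [← triple_product_permutation, ← triple_product_permutation]
      exact (triple_product_eq_det _ _ _).symm
    rw [this]
    simpa using hi
  have hB (s : Fin 2) : (D * hankel a s * Dᵀ) 0 0 = 0 ∧ (D * hankel a s * Dᵀ) 0 1 = 0 ∧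
      (D * hankel a s * Dᵀ) 1 0 = 0 ∧ (D * hankel a s * Dᵀ) 1 1 = 0 := by
    simp only [mul_hankel_mul_transpose_apply]
    exact ⟨huu s, hu s, (hankelForm_comm a s v u).trans (hu s), hvv s⟩
  have hprod : D.map MvPolynomial.C * hankelPencil a * (D.map MvPolynomial.C)ᵀ =
      MvPolynomial.X (R := k) (0 : Fin 2) • (D * hankel a 1 * Dᵀ).map MvPolynomial.C -
        MvPolynomial.X (R := k) (1 : Fin 2) • (D * hankel a 0 * Dᵀ).map MvPolynomial.C := by
    simp only [hankelPencil, Matrix.map_mul, Matrix.mul_sub, Matrix.sub_mul, Matrix.mul_smul,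
      Matrix.smul_mul, transpose_map]
  have hzero : (D.map MvPolynomial.C * hankelPencil a * (D.map MvPolynomial.C)ᵀ).det = 0 := by
    rw [hprod, det_fin_three]
    simp only [Matrix.sub_apply, Matrix.smul_apply, map_apply, hB, map_zero, smul_zero, sub_zero]
    ring
  have hC : (D.map (MvPolynomial.C (σ := Fin 2))).det ≠ 0 := by
    rw [← RingHom.mapMatrix_apply, ← RingHom.map_det]
    simpa using hdet
  rw [det_mul, det_mul, det_transpose] at hzero
  rw [cat22_eq_det]
  simpa [hC] using hzero

lemma cat22_eq_zero_of_collinear (h2 : (2 : k) ≠ 0) {a : Fin 6 → k} {u v w : Fin 3 → k}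
    (huv : u ⨯₃ v ≠ 0) (huw : u ⨯₃ w ≠ 0) (hvw : v ⨯₃ w ≠ 0)
    (hcol : tripleDet u v w = 0) (huu : ∀ s, hankelForm a s u u = 0)
    (hvv : ∀ s, hankelForm a s v v = 0) (hww : ∀ s, hankelForm a s w w = 0) : cat22 a = 0 := by
  refine cat22_eq_zero_of_isotropic huv huu (fun s => ?_) hvv
  obtain ⟨c, hc, hcd⟩ := exists_vecMul_eq_zero_iff.mpr hcol
  have hcomb : c 0 • u + c 1 • v + c 2 • w = 0 := by
    have := vecMul_eq_sum c (of ![u, v, w])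
    rw [hcd, Fin.sum_univ_three] at this
    exact this.symm
  have hcross (x : Fin 3 → k) : c 0 • (x ⨯₃ u) + c 1 • (x ⨯₃ v) + c 2 • (x ⨯₃ w) = 0 := by
    simpa using congrArg (crossProduct x) hcomb
  have hu := hcross u
  have hv := hcross v
  have hw := hcross w
  rw [cross_self] at hu hv hw
  have hwu : w ⨯₃ u ≠ 0 := fun h => huw (by rw [← cross_anticomm, h, neg_zero])
  have hwv : w ⨯₃ v ≠ 0 := fun h => hvw (by rw [← cross_anticomm, h, neg_zero])
  have hvu : v ⨯₃ u ≠ 0 := fun h => huv (by rw [← cross_anticomm, h, neg_zero])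
  have h01 : c 0 ≠ 0 ∧ c 1 ≠ 0 := by
    constructor <;> intro h0 <;> refine hc (funext fun i => ?_)
    · have e1 : c 1 = 0 := by simpa [h0, hwv] using hw
      have e2 : c 2 = 0 := by simpa [h0, hvw] using hv
      fin_cases i <;> simp [h0, e1, e2]
    · have e1 : c 0 = 0 := by simpa [h0, hwu] using hw
      have e2 : c 2 = 0 := by simpa [h0, huw] using hu
      fin_cases i <;> simp [h0, e1, e2]
  have hq' := hankelForm_combination a s u v w (c 0) (c 1) 0
  have hneg : c 0 • u + c 1 • v + (0 : k) • w = (0 : k) • u + (0 : k) • v + (-c 2) • w := by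
    rw [zero_smul, zero_smul, zero_smul, neg_smul, add_zero, zero_add, zero_add]
    exact eq_neg_of_add_eq_zero_left hcomb
  rw [hneg, hankelForm_combination, huu, hvv, hww] at hq'
  have : 2 * (c 0 * c 1) * hankelForm a s u v = 0 := by linear_combination -hq'
  simpa [h2, h01] using this

lemma cat22_eq_zero_of_eq_smul {a : Fin 6 → k} {M : Matrix (Fin 3) (Fin 3) k} {c : Fin 2 → k}
    (h : ∀ s, hankel a s = c s • M) : cat22 a = 0 := by
  by_cases hc : c 0 ≠ 0 ∨ c 1 ≠ 0
  · exact cat22_eq_zero_of_proportional hc (by rw [h, h, smul_smul, smul_smul, mul_comm])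
  · push Not at hc
    refine cat22_eq_zero_of_proportional (s := 1) (t := 0) (by simp) ?_
    rw [h, h, hc.1, hc.2]
    simp

/-- A conic through five points in general position is unique up to scaling. -/
lemma cat22_eq_zero_of_general_position (h2 : (2 : k) ≠ 0) {a : Fin 6 → k} {d : Fin 5 → Fin 3 → k}
    (hgen : ∀ i j l, i ≠ j → i ≠ l → j ≠ l → tripleDet (d i) (d j) (d l) ≠ 0)
    (hq : ∀ s i, hankelForm a s (d i) (d i) = 0) : cat22 a = 0 := by
  set D : Matrix (Fin 3) (Fin 3) k := of ![d 0, d 1, d 2] with hD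
  have hdet : D.det ≠ 0 := hgen 0 1 2 (by decide) (by decide) (by decide)
  have cramer (x : Fin 3 → k) : tripleDet x (d 1) (d 2) • d 0 +
      tripleDet (d 0) x (d 2) • d 1 + tripleDet (d 0) (d 1) x • d 2 =
      tripleDet (d 0) (d 1) (d 2) • x := by
    ext i
    simp only [tripleDet_eq, Pi.add_apply, Pi.smul_apply, smul_eq_mul]
    fin_cases i <;> simp only [Fin.zero_eta, Fin.mk_one, Fin.reduceFinMk] <;> ring
  have hconic (s : Fin 2) (i : Fin 5) :
      tripleDet (d 0) (d i) (d 2) * tripleDet (d 0) (d 1) (d i) * hankelForm a s (d 1) (d 2) +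
      tripleDet (d i) (d 1) (d 2) * tripleDet (d 0) (d 1) (d i) * hankelForm a s (d 0) (d 2) +
      tripleDet (d i) (d 1) (d 2) * tripleDet (d 0) (d i) (d 2) * hankelForm a s (d 0) (d 1)
      = 0 := by
    have h := hankelForm_combination a s (d 0) (d 1) (d 2) (tripleDet (d i) (d 1) (d 2))
      (tripleDet (d 0) (d i) (d 2)) (tripleDet (d 0) (d 1) (d i))
    have h0 := hankelForm_combination a s (d i) 0 0 (tripleDet (d 0) (d 1) (d 2)) 0 0
    simp only [smul_zero, add_zero, hq, mul_zero, zero_mul] at h0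
    rw [cramer, hq, hq, hq, h0] at h
    exact (mul_eq_zero_iff_left h2).mp (by linear_combination -h)
  have plucker : tripleDet (d 3) (d 1) (d 2) * tripleDet (d 0) (d 4) (d 2) -
      tripleDet (d 0) (d 3) (d 2) * tripleDet (d 4) (d 1) (d 2) =
      tripleDet (d 0) (d 1) (d 2) * tripleDet (d 3) (d 4) (d 2) := by
    simp only [tripleDet_eq]
    ring
  have h3 (s : Fin 2) := hconic s 3
  have h4 (s : Fin 2) := hconic s 4
  have hα2 : tripleDet (d 0) (d 1) (d 3) ≠ 0 := hgen _ _ _ (by decide) (by decide) (by decide)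
  have hβ2 : tripleDet (d 0) (d 1) (d 4) ≠ 0 := hgen _ _ _ (by decide) (by decide) (by decide)
  have h342 : tripleDet (d 3) (d 4) (d 2) ≠ 0 := hgen _ _ _ (by decide) (by decide) (by decide)
  generalize tripleDet (d 3) (d 1) (d 2) = α0, tripleDet (d 0) (d 3) (d 2) = α1,
    tripleDet (d 0) (d 1) (d 3) = α2, tripleDet (d 4) (d 1) (d 2) = β0,
    tripleDet (d 0) (d 4) (d 2) = β1, tripleDet (d 0) (d 1) (d 4) = β2 at *
  set n0 := α0 * β0 * (α2 * β1 - α1 * β2) with hn0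
  set n1 := α1 * β1 * (α0 * β2 - α2 * β0) with hn1
  set n2 := α2 * β2 * (α1 * β0 - α0 * β1) with hn2
  have hn2' : n2 ≠ 0 := by
    refine mul_ne_zero (mul_ne_zero hα2 hβ2) fun h => mul_ne_zero hdet h342 ?_
    change tripleDet (d 0) (d 1) (d 2) * _ = 0
    rw [← plucker]
    linear_combination -h
  set N : Matrix (Fin 3) (Fin 3) k := of ![![0, n2, n1], ![n2, 0, n0], ![n1, n0, 0]] with hN
  have hDAD (s : Fin 2) :
      D * hankel a s * Dᵀ = (hankelForm a s (d 0) (d 1) / n2) • N := by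
    have e1 : hankelForm a s (d 1) (d 2) = hankelForm a s (d 0) (d 1) / n2 * n0 := by
      field_simp
      linear_combination β0 * β2 * h3 s - α0 * α2 * h4 s
    have e2 : hankelForm a s (d 0) (d 2) = hankelForm a s (d 0) (d 1) / n2 * n1 := by
      field_simp
      linear_combination -(β1 * β2 * h3 s - α1 * α2 * h4 s)
    have e3 : hankelForm a s (d 0) (d 1) = hankelForm a s (d 0) (d 1) / n2 * n2 := by
      field_simp
    have hD0 : D 0 = d 0 := rfl
    have hD1 : D 1 = d 1 := rfl
    have hD2 : D 2 = d 2 := rfl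
    ext i j
    rw [mul_hankel_mul_transpose_apply]
    fin_cases i <;> fin_cases j
    · simpa [hD0, hD1, hD2, hN] using hq s 0
    · simpa [hD0, hD1, hD2, hN] using e3
    · simpa [hD0, hD1, hD2, hN] using e2
    · simpa [hD0, hD1, hD2, hN] using (hankelForm_comm a s _ _).trans e3
    · simpa [hD0, hD1, hD2, hN] using hq s 1
    · simpa [hD0, hD1, hD2, hN] using e1
    · simpa [hD0, hD1, hD2, hN] using (hankelForm_comm a s _ _).trans e2
    · simpa [hD0, hD1, hD2, hN] using (hankelForm_comm a s _ _).trans e1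
    · simpa [hD0, hD1, hD2, hN] using hq s 2
  have hu : IsUnit D.det := hdet.isUnit
  have hu' : IsUnit Dᵀ.det := by rwa [det_transpose]
  refine cat22_eq_zero_of_eq_smul (M := D⁻¹ * N * Dᵀ⁻¹)
    (c := fun s => hankelForm a s (d 0) (d 1) / n2) fun s => ?_
  rw [← Matrix.smul_mul, ← Matrix.mul_smul, ← hDAD, Matrix.mul_assoc D,
    nonsing_inv_mul_cancel_left _ _ hu, mul_nonsing_inv_cancel_right _ _ hu']

/-- Two conics of a nondegenerate catalecticant pencil meet in at most four points. -/
lemma cat22_eq_zero_of_five_points (h2 : (2 : k) ≠ 0) {a : Fin 6 → k} {d : Fin 5 → Fin 3 → k}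
    (hd : ∀ i j, i ≠ j → d i ⨯₃ d j ≠ 0)
    (hq : ∀ s i, hankelForm a s (d i) (d i) = 0) : cat22 a = 0 := by
  by_cases hgen : ∀ i j l, i ≠ j → i ≠ l → j ≠ l → tripleDet (d i) (d j) (d l) ≠ 0
  · exact cat22_eq_zero_of_general_position h2 hgen hq
  · push Not at hgen
    obtain ⟨i, j, l, hij, hil, hjl, hcol⟩ := hgen
    exact cat22_eq_zero_of_collinear h2 (hd _ _ hij) (hd _ _ hil) (hd _ _ hjl) hcol
      (fun s => hq s i) (fun s => hq s j) (fun s => hq s l)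

end Catalecticant

section Pairing

open Matrix

variable {k : Type*}

lemma pair_add [CommRing k] {n : ℕ} (w v v' : Fin (n + 1) → k) :
    pair w (v + v') = pair w v + pair w v' := by
  simp [pair, mul_add, Finset.sum_add_distrib]

lemma pair_formMul [CommRing k] {a b : ℕ} (w : Fin (a + b + 1) → k) (f : Fin (a + 1) → k)
    (g : Fin (b + 1) → k) :
    pair w (formMul f g) =
      ∑ i : Fin (a + 1), ∑ j : Fin (b + 1), w ⟨(i : ℕ) + j, by omega⟩ * (f i * g j) := by
  simp only [pair, formMul, Finset.mul_sum]
  rw [Finset.sum_comm, ← Fintype.sum_prod_type'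
    (f := fun (i : Fin (a + 1)) (j : Fin (b + 1)) => w ⟨i + j, by omega⟩ * (f i * g j))]
  refine Finset.sum_congr rfl fun q _ => ?_
  rw [Finset.sum_eq_single (⟨q.1 + q.2, by omega⟩ : Fin (a + b + 1))]
  · simp
  · intro i _ hi
    rw [if_neg fun h => hi (Fin.ext h.symm), mul_zero]
  · simp

lemma pair_formMul_sq_single [CommRing k] {a b : ℕ} (w : Fin (a + a + b + 1) → k)
    (d : Fin (a + 1) → k) (j : Fin (b + 1)) :
    pair w (formMul (formMul d d) (Pi.single j 1)) =
      ∑ i : Fin (a + 1), ∑ i' : Fin (a + 1), w ⟨(i : ℕ) + i' + j, by omega⟩ * (d i * d i') := by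
  rw [pair_formMul, ← pair_formMul (fun i : Fin (a + a + 1) => w ⟨i + j, by omega⟩) d d, pair]
  refine Finset.sum_congr rfl fun i _ => ?_
  rw [Finset.sum_eq_single j (fun j' _ hj => by simp [hj]) (by simp)]
  simp

/-- Representatives `c x² + b xy + y²` and `xy - t x²` (coefficients listed from `x²` to `y²`)
of the points of the projective plane of binary quadratic forms other than `x²`. -/
def quadraticForm [CommRing k] : (k × k) ⊕ k → Fin 3 → k
  | Sum.inl q => ![q.2, q.1, 1]
  | Sum.inr t => ![-t, 1, 0]

lemma card_line_le_four {u : Fin 3 → ZMod 2} (hu : u ≠ 0) :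
    #{q : (ZMod 2 × ZMod 2) ⊕ ZMod 2 | u ⬝ᵥ quadraticForm q = 0} ≤ 4 := by
  revert u
  decide

lemma zmod_two_mul_self (x : ZMod 2) : x * x = x := by
  revert x
  decide

variable [Field k]

lemma cat22_eq_zero_of_linear {w : Fin 6 → k} {l : Fin 2 → k} (hl : l ≠ 0)
    (h : ∀ c : Fin 4 → k, pair (n := 5) w (formMul (a := 2) (b := 3) (formMul l l) c) = 0) :
    cat22 w = 0 := by
  refine cat22_eq_zero_of_mulVec (e := ![l 0 ^ 2, 2 * l 0 * l 1, l 1 ^ 2]) (fun he => hl ?_)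
    fun s => funext fun i => ?_
  · have h0 : l 0 = 0 := by simpa using congrFun he 0
    have h1 : l 1 = 0 := by simpa using congrFun he 2
    ext i
    fin_cases i <;> simp [h0, h1]
  · have hj (j : Fin 4) : w ⟨j, by omega⟩ * l 0 ^ 2 + w ⟨1 + j, by omega⟩ * (2 * l 0 * l 1) +
        w ⟨2 + j, by omega⟩ * l 1 ^ 2 = 0 := by
      have e := (pair_formMul_sq_single (a := 1) (b := 3) w l j).symm.trans (h _)
      simp [Fin.sum_univ_two] at e
      linear_combination e
    have := hj ⟨i + s, by omega⟩
    fin_cases s <;> fin_cases i <;>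
      simpa [hankel, mulVec, dotProduct, Fin.sum_univ_three] using this

lemma hankelForm_eq_zero_of_quadratic {w : Fin 6 → k} {d : Fin 3 → k}
    (h : ∀ c : Fin 2 → k, pair (n := 5) w (formMul (a := 4) (b := 1) (formMul d d) c) = 0)
    (s : Fin 2) : hankelForm w s d d = 0 := by
  have e := (pair_formMul_sq_single (a := 2) (b := 1) w d s).symm.trans (h _)
  rw [← e]
  simp only [hankelForm, dotProduct, mulVec, Finset.mul_sum, hankel, of_apply]
  exact Finset.sum_congr rfl fun i _ => Finset.sum_congr rfl fun j _ => by ring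

lemma quadraticForm_ne_zero (q : (k × k) ⊕ k) : quadraticForm q ≠ 0 := by
  rcases q with q | t
  · exact fun h => by simpa [quadraticForm] using congrFun h 2
  · exact fun h => by simpa [quadraticForm] using congrFun h 1

lemma cross_quadraticForm_ne_zero {q q' : (k × k) ⊕ k} (h : q ≠ q') :
    quadraticForm q ⨯₃ quadraticForm q' ≠ 0 := by
  contrapose! h
  have h0 := congrFun h 0
  have h1 := congrFun h 1
  have h2 := congrFun h 2
  rcases q with ⟨b, c⟩ | t <;> rcases q' with ⟨b', c'⟩ | t' <;>
    simp [quadraticForm, cross_apply, sub_eq_zero] at h0 h1 h2 ⊢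
  · exact ⟨h0, h1.symm⟩
  · linear_combination -h2

open scoped Classical in
lemma card_conic_inter_le_four {p : ℕ} [Fact p.Prime] {w : Fin 6 → ZMod p} (hw : w ≠ 0)
    (hcat : cat22 w ≠ 0) :
    #{q : (ZMod p × ZMod p) ⊕ ZMod p |
      ∀ s, hankelForm w s (quadraticForm q) (quadraticForm q) = 0} ≤ 4 := by
  by_cases hp : (2 : ZMod p) = 0
  · obtain rfl : p = 2 := by
      have := (ZMod.natCast_eq_zero_iff 2 p).mp (by exact_mod_cast hp)
      exact (Nat.prime_dvd_prime_iff_eq Fact.out Nat.prime_two).mp this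
    obtain ⟨s, hs⟩ : ∃ s : Fin 2, (fun i : Fin 3 => w ⟨2 * i + s, by omega⟩) ≠ 0 := by
      by_contra! h
      refine hw (funext fun i => ?_)
      have h0 := h 0
      have h1 := h 1
      fin_cases i
      exacts [congrFun h0 0, congrFun h1 0, congrFun h0 1, congrFun h1 1, congrFun h0 2,
        congrFun h1 2]
    refine le_trans (Finset.card_le_card fun q hq => ?_) (card_line_le_four hs)
    have hq' := (Finset.mem_filter.mp hq).2 s
    rw [Finset.mem_filter]
    refine ⟨Finset.mem_univ _, ?_⟩
    rw [← hq']
    generalize quadraticForm q = d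
    have h2 : (2 : ZMod 2) = 0 := rfl
    have e0 := zmod_two_mul_self (d 0)
    have e1 := zmod_two_mul_self (d 1)
    have e2 := zmod_two_mul_self (d 2)
    fin_cases s
    · simp [hankelForm, hankel, mulVec, dotProduct, Fin.sum_univ_three]
      linear_combination -w 0 * e0 - w 2 * e1 - w 4 * e2 -
        (d 0 * w 2 * d 2 + d 0 * d 1 * w 1 + d 1 * d 2 * w 3) * h2
    · simp [hankelForm, hankel, mulVec, dotProduct, Fin.sum_univ_three]
      linear_combination -w 1 * e0 - w 3 * e1 - w 5 * e2 -
        (d 0 * w 3 * d 2 + d 0 * d 1 * w 2 + d 1 * d 2 * w 4) * h2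
  · by_contra! hcard
    obtain ⟨g⟩ := Function.Embedding.nonempty_of_card_le
      (α := Fin 5) (β := ({q : (ZMod p × ZMod p) ⊕ ZMod p |
        ∀ s, hankelForm w s (quadraticForm q) (quadraticForm q) = 0} : Finset _))
      (by rw [Fintype.card_fin, Fintype.card_coe]; exact hcard)
    exact hcat (cat22_eq_zero_of_five_points hp (d := fun i => quadraticForm (g i))
      (fun i j hij => cross_quadraticForm_ne_zero fun h => hij (g.injective (Subtype.ext h)))
      fun s i => (Finset.mem_filter.mp (g i).2).2 s)

end Pairing

section ExponentialSum

variable {p : ℕ} [Fact p.Prime]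

open scoped Classical in
/-- The Fourier transform of the indicator function of the multiples of a form. -/
lemma sum_stdAddChar_multiples {a b : ℕ} {e : Fin (a + 1) → ZMod p} (he : e ≠ 0)
    (w : Fin (a + b + 1) → ZMod p) :
    (∑ v, (if ∃ c : Fin (b + 1) → ZMod p, v = formMul e c then 1 else 0) *
        ZMod.stdAddChar (pair w v) : ℂ) =
      if ∀ c : Fin (b + 1) → ZMod p, pair w (formMul e c) = 0 then (p : ℂ) ^ (b + 1) else 0 := by
  let χ : AddChar (Fin (b + 1) → ZMod p) ℂ :=
    (ZMod.stdAddChar (N := p)).compAddMonoidHom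
      (AddMonoidHom.mk' (fun c => pair w (formMul e c)) fun c c' => by
        rw [formMul_add, pair_add])
  have hχ : χ = 0 ↔ ∀ c : Fin (b + 1) → ZMod p, pair w (formMul e c) = 0 := by
    rw [DFunLike.ext_iff]
    refine forall_congr' fun c => ?_
    rw [← ZMod.injective_stdAddChar.eq_iff, AddChar.map_zero_eq_one]
    rfl
  have hsum : (∑ v, (if ∃ c : Fin (b + 1) → ZMod p, v = formMul e c then 1 else 0) *
      ZMod.stdAddChar (pair w v) : ℂ) = ∑ c, χ c := by
    simp only [ite_mul, one_mul, zero_mul]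
    rw [← Finset.sum_filter]
    symm
    refine Finset.sum_nbij (formMul e) (fun c _ => by simp)
      ((formMul_right_injective b he).injOn) (fun v hv => ?_) fun _ _ => rfl
    obtain ⟨c, hc⟩ := (Finset.mem_filter.mp hv).2
    exact ⟨c, by simp, hc.symm⟩
  rw [hsum, AddChar.sum_eq_ite]
  simp [hχ, ZMod.card]

end ExponentialSum

section Assembly

open Polynomial

variable {k : Type*} [Field k]

lemma dehomogenize_quadraticForm_inl (q : k × k) :
    dehomogenize (n := 2) (quadraticForm (Sum.inl q)) = monicQuadratic q := by
  simp [dehomogenize_quadratic, quadraticForm, monicQuadratic]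

lemma dehomogenize_quadraticForm_inr (t : k) :
    dehomogenize (n := 2) (quadraticForm (Sum.inr t)) = X - C t := by
  simp [dehomogenize_quadratic, quadraticForm, sub_eq_add_neg]

lemma X_sub_C_sq_dvd_iff (v : Fin 6 → k) (t : k) :
    (X - C t) ^ 2 ∣ dehomogenize (n := 5) v ↔ ∃ c : Fin 4 → k,
      v = formMul (a := 2) (b := 3) (formMul (a := 1) (b := 1) ![-t, 1] ![-t, 1]) c := by
  have hl : dehomogenize (n := 1) ![-t, 1] = X - C t := by
    simp [dehomogenize_linear, sub_eq_add_neg]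
  have h := exists_eq_formMul_sq_iff (a := 1) (b := 3) (l := ![-t, 1])
    (fun h => by simpa using congrFun h 1) v
  rw [hl, natDegree_X_sub_C] at h
  exact ⟨fun hd => h.mpr ⟨hd, natDegree_dehomogenize_le (n := 5) v⟩, fun hc => (h.mp hc).1⟩

lemma natDegree_dehomogenize_le_three_iff (v : Fin 6 → k) :
    (dehomogenize (n := 5) v).natDegree ≤ 3 ↔ ∃ c : Fin 4 → k,
      v = formMul (a := 2) (b := 3) (formMul (a := 1) (b := 1) ![1, 0] ![1, 0]) c := by
  have hl : dehomogenize (n := 1) (![1, 0] : Fin 2 → k) = 1 := by simp [dehomogenize_linear]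
  have h := exists_eq_formMul_sq_iff (a := 1) (b := 3) (l := ![1, 0])
    (fun h => by simpa using congrFun h 0) v
  rw [hl] at h
  simpa using h.symm

lemma monicQuadratic_sq_dvd_iff (v : Fin 6 → k) (q : k × k) :
    monicQuadratic q ^ 2 ∣ dehomogenize (n := 5) v ↔ ∃ c : Fin 2 → k,
      v = formMul (a := 4) (b := 1) (formMul (a := 2) (b := 2)
        (quadraticForm (Sum.inl q)) (quadraticForm (Sum.inl q))) c := by
  have h := exists_eq_formMul_sq_iff (a := 2) (b := 1)
    (quadraticForm_ne_zero (Sum.inl q)) v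
  rw [dehomogenize_quadraticForm_inl, natDegree_monicQuadratic] at h
  exact ⟨fun hd => h.mpr ⟨hd, natDegree_dehomogenize_le (n := 5) v⟩, fun hc => (h.mp hc).1⟩

lemma X_sub_C_sq_dvd_and_natDegree_le_iff (v : Fin 6 → k) (t : k) :
    (X - C t) ^ 2 ∣ dehomogenize (n := 5) v ∧ (dehomogenize (n := 5) v).natDegree ≤ 3 ↔
      ∃ c : Fin 2 → k, v = formMul (a := 4) (b := 1) (formMul (a := 2) (b := 2)
        (quadraticForm (Sum.inr t)) (quadraticForm (Sum.inr t))) c := by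
  have h := exists_eq_formMul_sq_iff (a := 2) (b := 1)
    (quadraticForm_ne_zero (Sum.inr t)) v
  rw [dehomogenize_quadraticForm_inr, natDegree_X_sub_C] at h
  exact h.symm

/-- The coefficient with which the multiples of the square of a quadratic form are subtracted
in the sieve for singular quintics. -/
def sieveWeight [Fintype k] [DecidableEq k] : (k × k) ⊕ k → ℤ
  | Sum.inl q => (numRoots q : ℤ) - 1
  | Sum.inr _ => 1

lemma abs_sieveWeight_le_one [Fintype k] [DecidableEq k] (q : (k × k) ⊕ k) :
    |sieveWeight q| ≤ 1 := by
  rcases q with q | t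
  · have := numRoots_le_two q
    rw [sieveWeight, abs_le]
    omega
  · simp [sieveWeight]

open scoped Classical in
lemma indicator_singularQuintic_eq [Fintype k] [DecidableEq k] (v : Fin 6 → k) :
    (if v = 0 ∨ IsSingularQuintic v then 1 else 0 : ℤ) =
      (∑ t : k, if ∃ c : Fin 4 → k, v = formMul (a := 2) (b := 3)
        (formMul (a := 1) (b := 1) ![-t, 1] ![-t, 1]) c then 1 else 0) +
      (if ∃ c : Fin 4 → k, v = formMul (a := 2) (b := 3)
        (formMul (a := 1) (b := 1) ![1, 0] ![1, 0]) c then 1 else 0) -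
      ∑ q : (k × k) ⊕ k, sieveWeight q * if ∃ c : Fin 2 → k, v = formMul (a := 4) (b := 1)
        (formMul (a := 2) (b := 2) (quadraticForm q) (quadraticForm q)) c then 1 else 0 := by
  simp only [Fintype.sum_sum_type, sieveWeight, one_mul, ← X_sub_C_sq_dvd_iff,
    ← natDegree_dehomogenize_le_three_iff, ← monicQuadratic_sq_dvd_iff,
    ← X_sub_C_sq_dvd_and_natDegree_le_iff, isSingularQuintic_iff]
  rw [indicator_singular_eq (natDegree_dehomogenize_le (n := 5) v), sub_sub]

end Assembly

open scoped Classical in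
lemma expSum_eq_sum_stdAddChar {p : ℕ} [Fact p.Prime] (w : Fin 6 → ZMod p) :
    expSum p w = ∑ v : Fin 6 → ZMod p,
      ((if v = 0 ∨ IsSingularQuintic v then 1 else 0 : ℤ) : ℂ) *
        ZMod.stdAddChar (pair (n := 5) w v) := by
  refine Finset.sum_congr rfl fun v _ => ?_
  rw [ZMod.stdAddChar_apply, ZMod.toCircle_apply]
  split_ifs <;> simp

open scoped Classical in
lemma expSum_eq {p : ℕ} [Fact p.Prime] {w : Fin 6 → ZMod p} (hcat : cat22 w ≠ 0) :
    expSum p w = ((-∑ q : (ZMod p × ZMod p) ⊕ ZMod p with ∀ c : Fin 2 → ZMod p,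
      pair (n := 5) w (formMul (a := 4) (b := 1)
        (formMul (a := 2) (b := 2) (quadraticForm q) (quadraticForm q)) c) = 0,
      sieveWeight q : ℤ) : ℂ) * (p : ℂ) ^ 2 := by
  have hlin (l : Fin 2 → ZMod p) (hl : l ≠ 0) :
      (∑ v : Fin 6 → ZMod p, (if ∃ c : Fin 4 → ZMod p, v = formMul (a := 2) (b := 3)
        (formMul (a := 1) (b := 1) l l) c then 1 else 0) *
          ZMod.stdAddChar (pair (n := 5) w v) : ℂ) = 0 :=
    (sum_stdAddChar_multiples (a := 2) (b := 3)
      (formMul_ne_zero (a := 1) (b := 1) hl hl) w).trans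
      (if_neg fun h => hcat (cat22_eq_zero_of_linear hl h))
  have hquad (q : (ZMod p × ZMod p) ⊕ ZMod p) := sum_stdAddChar_multiples (a := 4) (b := 1)
      (formMul_ne_zero (a := 2) (b := 2) (quadraticForm_ne_zero q) (quadraticForm_ne_zero q)) w
  rw [expSum_eq_sum_stdAddChar]
  simp only [indicator_singularQuintic_eq, Int.cast_sub, Int.cast_add, Int.cast_sum, Int.cast_mul,
    Int.cast_ite, Int.cast_one, Int.cast_zero, sub_mul, add_mul, Finset.sum_mul,
    Finset.sum_sub_distrib, Finset.sum_add_distrib]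
  rw [Finset.sum_comm, Finset.sum_eq_zero fun t _ => hlin ![-t, 1] fun h => by
      simpa using congrFun h 1,
    hlin ![1, 0] fun h => by simpa using congrFun h 0, Finset.sum_comm]
  simp only [mul_assoc, ← Finset.mul_sum]
  rw [Finset.sum_congr rfl fun q _ => congrArg _ (hquad q)]
  simp [-Fintype.sum_sum_type, Finset.sum_filter, Finset.sum_mul]

/-- If `w ∈ V₅` is nonzero and its catalecticant covariant `Cat_{2,2}(x,y:w)` is not the
zero cubic form, then `S(w) = C·p²` for some integer `C` with `|C| ≤ 4`. -/
theorem stmt0 (p : ℕ) [Fact p.Prime] (w : Fin 6 → ZMod p) (hw : w ≠ 0)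
    (hcat : cat22 w ≠ 0) :
    ∃ C : ℤ, |C| ≤ 4 ∧ expSum p w = (C : ℂ) * (p : ℂ) ^ 2 := by
  classical
  refine ⟨_, ?_, expSum_eq hcat⟩
  rw [abs_neg]
  refine (Finset.abs_sum_le_sum_abs _ _).trans
    ((Finset.sum_le_card_nsmul _ _ 1 fun q _ => abs_sieveWeight_le_one q).trans ?_)
  rw [nsmul_one]
  exact_mod_cast (Finset.card_le_card <| Finset.monotone_filter_right _ fun q _ hq s =>
    hankelForm_eq_zero_of_quadratic hq s).trans (card_conic_inter_le_four hw hcat)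
end

section
/- (Generalized Waring decomposition.) Let k be a field of arbitrary characteristic, f a nonzero homogeneous binary form of degree n ≥ 1 over k with irreducible factorization f = f_1^{e_1}·f_2^{e_2}⋯f_r^{e_r}, where the f_i are pairwise non-associate irreducible homogeneous binary forms, and let m ≥ n. Then the subspaces (⊥(f_i^{e_i}))_m ⊆ V_m, 1 ≤ i ≤ r, are linearly independent and their (internal direct) sum equals (⊥f)_m; that is, (⊥f)_m = ⊕_{i=1}^r (⊥(f_i^{e_i}))_m. -/
open Finset

/-- The pairing between `w ∈ V_n` (encoded as a coefficient tuple) and a binary `n`-ic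
form given as a polynomial in the variables `x = X 0`, `y = X 1`:
`(w, v) = ∑ i, w i * (coefficient of x^(n-i) * y^i in v)`. -/
noncomputable def pairPoly {k : Type*} [CommRing k] (n : ℕ) (w : Fin (n + 1) → k)
    (v : MvPolynomial (Fin 2) k) : k :=
  ∑ i : Fin (n + 1), w i *
    MvPolynomial.coeff (Finsupp.single 0 (n - (i : ℕ)) + Finsupp.single 1 (i : ℕ)) v

/-- The pairing with a fixed binary `n`-ic form, as a linear functional on `V_n`. -/
noncomputable def pairL {k : Type*} [CommRing k] (n : ℕ) (v : MvPolynomial (Fin 2) k) :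
    (Fin (n + 1) → k) →ₗ[k] k where
  toFun w := pairPoly n w v
  map_add' a b := by
    simp [pairPoly, add_mul, Finset.sum_add_distrib]
  map_smul' c a := by
    simp [pairPoly, Finset.mul_sum, mul_assoc]

/-- The degree `m` part `(⊥g)_m ⊆ V_m` of the apolar subspace of a binary form `g`
of degree `d`: all `w ∈ V_m` with `(w, g·h) = 0` for every form `h` of degree `m - d`. -/
noncomputable def perp {k : Type*} [CommRing k] (m d : ℕ) (g : MvPolynomial (Fin 2) k) :
    Submodule k (Fin (m + 1) → k) :=
  ⨅ (h : MvPolynomial (Fin 2) k) (_ : h.IsHomogeneous (m - d)),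
    LinearMap.ker (pairL m (g * h))

/-- Every exponent of total degree `m` in two variables is that of some `x^(m-i) * y^i`. -/
theorem exists_eq_single_add_single {m : ℕ} {s : Fin 2 →₀ ℕ} (hs : s.degree = m) :
    ∃ i : Fin (m + 1), s = Finsupp.single 0 (m - (i : ℕ)) + Finsupp.single 1 (i : ℕ) := by
  have h : s 0 + s 1 = m := by
    rw [← hs, Finsupp.degree_eq_sum, Fin.sum_univ_two]
  refine ⟨⟨s 1, by omega⟩, ?_⟩
  ext j
  fin_cases j
  · simp; omega
  · simp

theorem degree_single_add_single {m : ℕ} (i : Fin (m + 1)) :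
    (Finsupp.single (0 : Fin 2) (m - (i : ℕ)) + Finsupp.single 1 (i : ℕ)).degree = m := by
  simp [Finsupp.degree_eq_sum, Fin.sum_univ_two]
  omega

theorem single_add_single_inj {m : ℕ} {i j : Fin (m + 1)}
    (h : Finsupp.single (0 : Fin 2) (m - (i : ℕ)) + Finsupp.single 1 (i : ℕ) =
      Finsupp.single 0 (m - (j : ℕ)) + Finsupp.single 1 (j : ℕ)) : i = j := by
  have := DFunLike.congr_fun h 1
  simp at this
  omega

/-- A form of degree `m` in two variables is determined by its `m + 1` coefficients. -/
noncomputable def formEquiv (k : Type*) [Field k] (m : ℕ) :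
    MvPolynomial.homogeneousSubmodule (Fin 2) k m ≃ₗ[k] (Fin (m + 1) → k) :=
  LinearEquiv.ofBijective
    ((LinearMap.pi fun i : Fin (m + 1) => MvPolynomial.lcoeff k
        (Finsupp.single (0 : Fin 2) (m - (i : ℕ)) + Finsupp.single 1 (i : ℕ))) ∘ₗ
      (MvPolynomial.homogeneousSubmodule (Fin 2) k m).subtype) (by
    constructor
    · rw [← LinearMap.ker_eq_bot, LinearMap.ker_eq_bot']
      rintro ⟨p, hp⟩ h0
      ext s
      by_cases hs : s.degree = m
      · obtain ⟨i, rfl⟩ := exists_eq_single_add_single hs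
        exact congrFun h0 i
      · exact MvPolynomial.IsHomogeneous.coeff_eq_zero hp hs
    · intro c
      refine ⟨⟨∑ i : Fin (m + 1), MvPolynomial.monomial
        (Finsupp.single (0 : Fin 2) (m - (i : ℕ)) + Finsupp.single 1 (i : ℕ)) (c i),
        MvPolynomial.IsHomogeneous.sum _ _ _ fun i _ =>
          MvPolynomial.isHomogeneous_monomial _ (degree_single_add_single i)⟩, ?_⟩
      ext j
      simp only [LinearMap.comp_apply, LinearMap.pi_apply, Submodule.subtype_apply,
        MvPolynomial.lcoeff_apply, MvPolynomial.coeff_sum, MvPolynomial.coeff_monomial]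
      rw [Finset.sum_eq_single j]
      · simp
      · intro i _ hij
        rw [if_neg fun h => hij (single_add_single_inj h)]
      · simp)

theorem formEquiv_apply {k : Type*} [Field k] {m : ℕ}
    (p : MvPolynomial.homogeneousSubmodule (Fin 2) k m) (i : Fin (m + 1)) :
    formEquiv k m p i = MvPolynomial.coeff
      (Finsupp.single 0 (m - (i : ℕ)) + Finsupp.single 1 (i : ℕ)) (p : MvPolynomial (Fin 2) k) :=
  rfl

theorem finrank_homogeneousSubmodule_fin_two (k : Type*) [Field k] (m : ℕ) :
    Module.finrank k (MvPolynomial.homogeneousSubmodule (Fin 2) k m) = m + 1 := by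
  simp [(formEquiv k m).finrank_eq]

instance finiteDimensional_homogeneousSubmodule_fin_two (k : Type*) [Field k] (m : ℕ) :
    FiniteDimensional k (MvPolynomial.homogeneousSubmodule (Fin 2) k m) :=
  (formEquiv k m).symm.finiteDimensional

/-- A homogeneous multiple of a nonzero form is the product with a form. -/
theorem MvPolynomial.IsHomogeneous.of_mul_left {k σ : Type*} [Field k] {a c : ℕ}
    {g q : MvPolynomial σ k} (hg : g.IsHomogeneous a) (hg0 : g ≠ 0)
    (h : (g * q).IsHomogeneous (a + c)) : q.IsHomogeneous c := by
  let _ := MvPolynomial.gradedAlgebra (σ := σ) (R := k)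
  have key := DirectSum.coe_decompose_mul_add_of_left_mem
    (MvPolynomial.homogeneousSubmodule σ k) (i := a) (j := c) (a := g) (b := q) hg
  rw [DirectSum.decompose_of_mem_same _ h] at key
  rw [mul_left_cancel₀ hg0 key]
  exact SetLike.coe_mem (DirectSum.decompose (MvPolynomial.homogeneousSubmodule σ k) q c)

/-- The forms of degree `m` that are multiples of `g`. -/
noncomputable def formMultiples {k : Type*} [Field k] (m : ℕ) (g : MvPolynomial (Fin 2) k) :
    Submodule k (MvPolynomial (Fin 2) k) :=
  MvPolynomial.homogeneousSubmodule (Fin 2) k m ⊓ (Ideal.span {g}).restrictScalars k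

theorem mem_formMultiples {k : Type*} [Field k] {m : ℕ} {g p : MvPolynomial (Fin 2) k} :
    p ∈ formMultiples m g ↔ p.IsHomogeneous m ∧ g ∣ p := by
  simp [formMultiples, Ideal.mem_span_singleton]

theorem formMultiples_eq_map {k : Type*} [Field k] {a m : ℕ} (ham : a ≤ m)
    {g : MvPolynomial (Fin 2) k} (hg : g.IsHomogeneous a) (hg0 : g ≠ 0) :
    formMultiples m g =
      (MvPolynomial.homogeneousSubmodule (Fin 2) k (m - a)).map (LinearMap.mulLeft k g) := by
  ext p
  rw [mem_formMultiples, Submodule.mem_map]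
  constructor
  · rintro ⟨hp, q, rfl⟩
    refine ⟨q, hg.of_mul_left hg0 ?_, rfl⟩
    rwa [Nat.add_sub_cancel' ham]
  · rintro ⟨q, hq, rfl⟩
    refine ⟨?_, dvd_mul_right g q⟩
    have := hg.mul hq
    rwa [Nat.add_sub_cancel' ham] at this

theorem finrank_formMultiples {k : Type*} [Field k] {a m : ℕ} (ham : a ≤ m)
    {g : MvPolynomial (Fin 2) k} (hg : g.IsHomogeneous a) (hg0 : g ≠ 0) :
    Module.finrank k (formMultiples m g) = m - a + 1 := by
  rw [formMultiples_eq_map ham hg hg0, ← finrank_homogeneousSubmodule_fin_two k (m - a)]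
  exact (Submodule.equivMapOfInjective _ (mul_right_injective₀ hg0) _).finrank_eq.symm

theorem formMultiples_inf {k : Type*} [Field k] {m : ℕ} {g h : MvPolynomial (Fin 2) k}
    (hgh : IsRelPrime g h) :
    formMultiples m g ⊓ formMultiples m h = formMultiples m (g * h) := by
  ext p
  simp only [Submodule.mem_inf, mem_formMultiples]
  constructor
  · rintro ⟨⟨hp, h1⟩, -, h2⟩
    exact ⟨hp, hgh.mul_dvd h1 h2⟩
  · rintro ⟨hp, h1⟩
    exact ⟨⟨hp, (dvd_mul_right g h).trans h1⟩, hp, (dvd_mul_left h g).trans h1⟩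

theorem formMultiples_sup {k : Type*} [Field k] {a b m : ℕ} (habm : a + b ≤ m)
    {g h : MvPolynomial (Fin 2) k} (hg : g.IsHomogeneous a) (hg0 : g ≠ 0)
    (hh : h.IsHomogeneous b) (hh0 : h ≠ 0) (hgh : IsRelPrime g h) :
    formMultiples m g ⊔ formMultiples m h = MvPolynomial.homogeneousSubmodule (Fin 2) k m := by
  have hfin (u : MvPolynomial (Fin 2) k) : FiniteDimensional k (formMultiples m u) :=
    Submodule.finiteDimensional_of_le
      (S₂ := MvPolynomial.homogeneousSubmodule (Fin 2) k m) inf_le_left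
  have := hfin g
  have := hfin h
  apply Submodule.eq_of_le_of_finrank_eq (sup_le inf_le_left inf_le_left)
  have hdim := Submodule.finrank_sup_add_finrank_inf_eq (formMultiples m g) (formMultiples m h)
  rw [formMultiples_inf hgh, finrank_formMultiples habm (hg.mul hh) (mul_ne_zero hg0 hh0),
    finrank_formMultiples (by omega) hg hg0, finrank_formMultiples (by omega) hh hh0] at hdim
  rw [finrank_homogeneousSubmodule_fin_two]
  omega

/-- The pairing with a tuple `w ∈ V_n`, as a linear functional on polynomials. -/
noncomputable def pairFunctional {k : Type*} [Field k] (n : ℕ) (w : Fin (n + 1) → k) :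
    Module.Dual k (MvPolynomial (Fin 2) k) :=
  ∑ i : Fin (n + 1), w i • MvPolynomial.lcoeff k
    (Finsupp.single 0 (n - (i : ℕ)) + Finsupp.single 1 (i : ℕ))

theorem pairFunctional_apply {k : Type*} [Field k] (n : ℕ) (w : Fin (n + 1) → k)
    (v : MvPolynomial (Fin 2) k) : pairFunctional n w v = pairPoly n w v := by
  simp [pairFunctional, pairPoly]

theorem exists_pairFunctional_eq {k : Type*} [Field k] (m : ℕ)
    (φ : Module.Dual k (MvPolynomial (Fin 2) k)) :
    ∃ w : Fin (m + 1) → k, ∀ p : MvPolynomial (Fin 2) k, p.IsHomogeneous m →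
      pairFunctional m w p = φ p := by
  let ψ : Module.Dual k (Fin (m + 1) → k) :=
    φ ∘ₗ (MvPolynomial.homogeneousSubmodule (Fin 2) k m).subtype ∘ₗ (formEquiv k m).symm.toLinearMap
  refine ⟨fun i => ψ (Pi.single i 1), fun p hp => ?_⟩
  have h1 : ψ (formEquiv k m ⟨p, hp⟩) = φ p := by simp [ψ]
  rw [← h1, LinearMap.pi_apply_eq_sum_univ ψ, pairFunctional_apply, pairPoly]
  refine Finset.sum_congr rfl fun i _ => ?_
  rw [formEquiv_apply, smul_eq_mul, mul_comm]
  congr 3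
  ext j
  simp [Pi.single_apply, eq_comm]

theorem eq_zero_of_pairFunctional_eq_zero {k : Type*} [Field k] {m : ℕ} {w : Fin (m + 1) → k}
    (hw : ∀ p : MvPolynomial (Fin 2) k, p.IsHomogeneous m → pairFunctional m w p = 0) :
    w = 0 := by
  ext j
  have h := hw _ ((formEquiv k m).symm (Pi.single j 1)).2
  rw [pairFunctional_apply, pairPoly] at h
  simp_rw [← formEquiv_apply, LinearEquiv.apply_symm_apply] at h
  simpa [Pi.single_apply] using h

theorem mem_perp_iff {k : Type*} [Field k] {a m : ℕ} (ham : a ≤ m)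
    {g : MvPolynomial (Fin 2) k} (hg : g.IsHomogeneous a) (hg0 : g ≠ 0) {w : Fin (m + 1) → k} :
    w ∈ perp m a g ↔ pairFunctional m w ∈ (formMultiples m g).dualAnnihilator := by
  rw [formMultiples_eq_map ham hg hg0, Submodule.mem_dualAnnihilator]
  simp only [perp, Submodule.mem_iInf, LinearMap.mem_ker, Submodule.mem_map,
    forall_exists_index, and_imp, forall_apply_eq_imp_iff₂, pairFunctional_apply]
  rfl

theorem pairFunctional_add {k : Type*} [Field k] (n : ℕ) (w w' : Fin (n + 1) → k) :
    pairFunctional n (w + w') = pairFunctional n w + pairFunctional n w' := by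
  simp [pairFunctional, add_smul, Finset.sum_add_distrib]

theorem disjoint_perp {k : Type*} [Field k] {a b m : ℕ} (habm : a + b ≤ m)
    {g h : MvPolynomial (Fin 2) k} (hg : g.IsHomogeneous a) (hg0 : g ≠ 0)
    (hh : h.IsHomogeneous b) (hh0 : h ≠ 0) (hgh : IsRelPrime g h) :
    Disjoint (perp m a g) (perp m b h) := by
  rw [Submodule.disjoint_def]
  intro w hwg hwh
  rw [mem_perp_iff (by omega) hg hg0] at hwg
  rw [mem_perp_iff (by omega) hh hh0] at hwh
  have hw := Submodule.mem_inf.2 ⟨hwg, hwh⟩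
  rw [← Submodule.dualAnnihilator_sup_eq, formMultiples_sup habm hg hg0 hh hh0 hgh,
    Submodule.mem_dualAnnihilator] at hw
  exact eq_zero_of_pairFunctional_eq_zero hw

theorem perp_sup {k : Type*} [Field k] {a b m : ℕ} (habm : a + b ≤ m)
    {g h : MvPolynomial (Fin 2) k} (hg : g.IsHomogeneous a) (hg0 : g ≠ 0)
    (hh : h.IsHomogeneous b) (hh0 : h ≠ 0) (hgh : IsRelPrime g h) :
    perp m a g ⊔ perp m b h = perp m (a + b) (g * h) := by
  have hmem := fun w => mem_perp_iff (w := w) habm (hg.mul hh) (mul_ne_zero hg0 hh0)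
  have hmemg := fun w => mem_perp_iff (w := w) (by omega : a ≤ m) hg hg0
  have hmemh := fun w => mem_perp_iff (w := w) (by omega : b ≤ m) hh hh0
  simp_rw [← formMultiples_inf hgh] at hmem
  apply le_antisymm
  · refine sup_le (fun w hw => ?_) fun w hw => ?_
    · rw [hmem]
      exact Submodule.dualAnnihilator_anti inf_le_left ((hmemg w).1 hw)
    · rw [hmem]
      exact Submodule.dualAnnihilator_anti inf_le_right ((hmemh w).1 hw)
  · intro w hw
    rw [hmem, Subspace.dualAnnihilator_inf_eq, Submodule.mem_sup] at hw
    obtain ⟨α, hα, β, hβ, hαβ⟩ := hw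
    obtain ⟨u, hu⟩ := exists_pairFunctional_eq m α
    obtain ⟨v, hv⟩ := exists_pairFunctional_eq m β
    rw [Submodule.mem_dualAnnihilator] at hα hβ
    have hug : u ∈ perp m a g := by
      rw [hmemg, Submodule.mem_dualAnnihilator]
      intro p hp
      rw [hu p hp.1, hα p hp]
    have hvh : v ∈ perp m b h := by
      rw [hmemh, Submodule.mem_dualAnnihilator]
      intro p hp
      rw [hv p hp.1, hβ p hp]
    have hw : w - (u + v) = 0 := by
      apply eq_zero_of_pairFunctional_eq_zero
      intro p hp
      have h1 : pairFunctional m w = pairFunctional m (w - (u + v)) + pairFunctional m (u + v) := by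
        rw [← pairFunctional_add, sub_add_cancel]
      have h2 := DFunLike.congr_fun (hαβ.trans h1) p
      rw [pairFunctional_add] at h2
      simp only [LinearMap.add_apply, hu p hp, hv p hp] at h2
      exact left_eq_add.1 (h2.trans (add_comm _ _))
    rw [sub_eq_zero.1 hw]
    exact Submodule.add_mem_sup hug hvh

theorem perp_one {k : Type*} [Field k] (m : ℕ) :
    perp m 0 (1 : MvPolynomial (Fin 2) k) = ⊥ := by
  rw [eq_bot_iff]
  intro w hw
  rw [mem_perp_iff (Nat.zero_le m) (MvPolynomial.isHomogeneous_one (Fin 2) k) one_ne_zero,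
    Submodule.mem_dualAnnihilator] at hw
  exact eq_zero_of_pairFunctional_eq_zero fun p hp =>
    hw p (mem_formMultiples.2 ⟨hp, one_dvd p⟩)

theorem iSup_perp_eq_perp_prod {k ι : Type*} [Field k] {m : ℕ}
    {g : ι → MvPolynomial (Fin 2) k} {a : ι → ℕ} (hg : ∀ i, (g i).IsHomogeneous (a i))
    (hg0 : ∀ i, g i ≠ 0) (hrel : ∀ i j, i ≠ j → IsRelPrime (g i) (g j))
    (s : Finset ι) (hs : ∑ i ∈ s, a i ≤ m) :
    ⨆ i ∈ s, perp m (a i) (g i) = perp m (∑ i ∈ s, a i) (∏ i ∈ s, g i) := by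
  classical
  induction s using Finset.induction_on with
  | empty => simp [perp_one]
  | insert i s his ih =>
    rw [Finset.sum_insert his] at hs ⊢
    rw [Finset.iSup_insert, Finset.prod_insert his, ih (by omega)]
    exact perp_sup hs (hg i) (hg0 i) (MvPolynomial.IsHomogeneous.prod s g a fun j _ => hg j)
      (Finset.prod_ne_zero_iff.2 fun j _ => hg0 j)
      (IsRelPrime.prod_right fun j hj => hrel i j (ne_of_mem_of_not_mem hj his).symm)

theorem iSupIndep_perp {k ι : Type*} [Field k] [Fintype ι] {m : ℕ}
    {g : ι → MvPolynomial (Fin 2) k} {a : ι → ℕ} (hg : ∀ i, (g i).IsHomogeneous (a i))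
    (hg0 : ∀ i, g i ≠ 0) (hrel : ∀ i j, i ≠ j → IsRelPrime (g i) (g j))
    (hm : ∑ i, a i ≤ m) :
    iSupIndep fun i => perp m (a i) (g i) := by
  classical
  intro i
  have hsum := Finset.add_sum_erase Finset.univ a (Finset.mem_univ i)
  have hsup := iSup_perp_eq_perp_prod (m := m) hg hg0 hrel (Finset.univ.erase i) (by omega)
  simp only [Finset.mem_erase, Finset.mem_univ, and_true] at hsup
  rw [hsup]
  exact disjoint_perp (by omega) (hg i) (hg0 i)
    (MvPolynomial.IsHomogeneous.prod _ g a fun j _ => hg j)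
    (Finset.prod_ne_zero_iff.2 fun j _ => hg0 j)
    (IsRelPrime.prod_right fun j hj => hrel i j (Finset.ne_of_mem_erase hj).symm)

/-- Generalized Waring decomposition: if `f` is a nonzero binary form of degree `n ≥ 1`
over any field, with irreducible factorization `f = ∏ i, (f' i)^(e i)` into pairwise
non-associate irreducible homogeneous factors `f' i` of degree `d i`, and `m ≥ n`, then
the subspaces `(⊥(f' i)^(e i))_m ⊆ V_m` are independent and their sum is `(⊥f)_m`. -/
theorem stmt3 {k : Type*} [Field k] (n m : ℕ) (hn : 1 ≤ n) (hm : n ≤ m)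
    (f : MvPolynomial (Fin 2) k) (hf : f ≠ 0) (hfhom : f.IsHomogeneous n)
    (r : ℕ) (f' : Fin r → MvPolynomial (Fin 2) k) (d e : Fin r → ℕ)
    (hirr : ∀ i, Irreducible (f' i))
    (hhom : ∀ i, (f' i).IsHomogeneous (d i))
    (he : ∀ i, 1 ≤ e i)
    (hna : ∀ i j, i ≠ j → ¬ Associated (f' i) (f' j))
    (hfact : f = ∏ i, f' i ^ e i) :
    iSupIndep (fun i => perp m (e i * d i) (f' i ^ e i)) ∧
    (⨆ i, perp m (e i * d i) (f' i ^ e i)) = perp m n f := by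
  have hg (i : Fin r) : (f' i ^ e i).IsHomogeneous (e i * d i) := by
    rw [mul_comm]
    exact (hhom i).pow (e i)
  have hg0 (i : Fin r) : f' i ^ e i ≠ 0 := pow_ne_zero _ (hirr i).ne_zero
  have hrel (i j : Fin r) (hij : i ≠ j) : IsRelPrime (f' i ^ e i) (f' j ^ e j) :=
    IsRelPrime.pow ((hirr i).isRelPrime_iff_not_dvd.2 fun hdvd =>
      hna i j hij ((hirr i).associated_of_dvd (hirr j) hdvd))
  have hdeg : n = ∑ i, e i * d i := by
    refine hfhom.inj_right ?_ hf
    rw [hfact]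
    exact MvPolynomial.IsHomogeneous.prod _ _ _ fun i _ => hg i
  subst hdeg
  refine ⟨iSupIndep_perp hg hg0 hrel hm, ?_⟩
  rw [hfact]
  simpa using iSup_perp_eq_perp_prod hg hg0 hrel Finset.univ hm
end

section
/- Let p be a prime and w ∈ V_5. Then S(w) = p⁴·N₁ + p²·(N₂ − N₃), where N₁ = #{ [ℓ] ∈ P(V_1^*) : ℓ² is apolar to w }, N₂ = #{ [q] ∈ P(V_2^*) : q² is apolar to w }, and N₃ = #{ ([ℓ₁],[ℓ₂]) ∈ P(V_1^*)×P(V_1^*) : ℓ₁²ℓ₂² is apolar to w }. -/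
open Finset

namespace BinaryForm

open MvPolynomial

section Field

variable {k : Type*} [Field k]

/-- The homogeneous polynomial `∑ i, f i * x^(n-i) * y^i` of a coefficient tuple. -/
noncomputable def toPoly (n : ℕ) : (Fin (n + 1) → k) →ₗ[k] MvPolynomial (Fin 2) k where
  toFun f := ∑ i, C (f i) * (X 0 ^ (n - i) * X 1 ^ (i : ℕ))
  map_add' f g := by simp [add_mul, Finset.sum_add_distrib]
  map_smul' c f := by simp [Finset.smul_sum, smul_eq_C_mul, mul_assoc]

theorem toPoly_apply (n : ℕ) (f : Fin (n + 1) → k) :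
    toPoly n f = ∑ i, C (f i) * (X 0 ^ (n - i) * X 1 ^ (i : ℕ)) := rfl

theorem isHomogeneous_toPoly (n : ℕ) (f : Fin (n + 1) → k) :
    (toPoly n f).IsHomogeneous n := by
  rw [toPoly_apply]
  refine IsHomogeneous.sum _ _ _ fun i _ => IsHomogeneous.C_mul ?_ _
  have := (isHomogeneous_X_pow (R := k) (0 : Fin 2) (n - i)).mul (isHomogeneous_X_pow 1 (i : ℕ))
  rwa [Nat.sub_add_cancel (Nat.lt_succ_iff.mp i.2)] at this

theorem aeval_toPoly (n : ℕ) (f : Fin (n + 1) → k) :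
    aeval ![1, Polynomial.X] (toPoly n f) =
      ∑ i, Polynomial.C (f i) * Polynomial.X ^ (i : ℕ) := by
  simp [toPoly_apply]

theorem coeff_aeval_toPoly (n : ℕ) (f : Fin (n + 1) → k) (i : Fin (n + 1)) :
    (aeval ![1, Polynomial.X] (toPoly n f) : Polynomial k).coeff i = f i := by
  rw [aeval_toPoly]
  simp [Polynomial.finsetSum_coeff, Polynomial.coeff_X_pow, Fin.val_inj]

theorem natDegree_aeval_toPoly_le (n : ℕ) (f : Fin (n + 1) → k) :
    (aeval ![1, Polynomial.X] (toPoly n f) : Polynomial k).natDegree ≤ n := by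
  rw [aeval_toPoly]
  refine Polynomial.natDegree_sum_le_of_forall_le _ _ fun i _ => ?_
  exact (Polynomial.natDegree_C_mul_X_pow_le _ _).trans (Nat.lt_succ_iff.mp i.2)

theorem toPoly_injective (n : ℕ) : Function.Injective (toPoly (k := k) n) := fun f g h => by
  ext i
  rw [← coeff_aeval_toPoly n f i, h, coeff_aeval_toPoly]

theorem toPoly_ne_zero {n : ℕ} {f : Fin (n + 1) → k} (hf : f ≠ 0) : toPoly n f ≠ 0 := by
  rwa [Ne, map_eq_zero_iff _ (toPoly_injective n)]

theorem totalDegree_toPoly {n : ℕ} {f : Fin (n + 1) → k} (hf : f ≠ 0) :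
    (toPoly n f).totalDegree = n :=
  (isHomogeneous_toPoly n f).totalDegree (toPoly_ne_zero hf)

theorem exists_toPoly_eq {n : ℕ} {r : MvPolynomial (Fin 2) k} (hr : r.IsHomogeneous n) :
    ∃ f, toPoly n f = r := by
  suffices r ∈ LinearMap.range (toPoly (k := k) n) from this
  rw [r.as_sum]
  refine Submodule.sum_mem _ fun d hd => ?_
  have hdeg : d 0 + d 1 = n := by
    have := hr.degree_eq_sum_deg_support hd
    have h2 : d.degree = d 0 + d 1 := by simp [Finsupp.degree_eq_sum]
    by_contra hne
    exact (mem_support_iff.mp hd) (hr.coeff_eq_zero (by omega))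
  refine ⟨Pi.single ⟨d 1, by omega⟩ (coeff d r), ?_⟩
  rw [toPoly_apply, Finset.sum_eq_single ⟨d 1, by omega⟩]
  · rw [monomial_eq, Finsupp.prod_fintype _ _ (by simp)]
    simp [← hdeg]
  · intro i _ hi
    simp [hi]
  · simp

theorem toPoly_formMul {a b : ℕ} (f : Fin (a + 1) → k) (g : Fin (b + 1) → k) :
    toPoly (a + b) (formMul f g) = toPoly a f * toPoly b g := by
  simp only [toPoly_apply, formMul, map_sum, Finset.sum_mul]
  rw [Finset.sum_comm, ← Finset.univ_product_univ, Finset.sum_product]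
  simp only [Finset.mul_sum]
  refine Finset.sum_congr rfl fun i _ => Finset.sum_congr rfl fun j _ => ?_
  rw [Finset.sum_eq_single ⟨i + j, by omega⟩]
  · have : a + b - (i + j : ℕ) = (a - i) + (b - j) := by omega
    simp only [if_true, this, C_mul]
    ring
  · intro c _ hc
    rw [if_neg fun h => hc (Fin.ext h.symm)]
    simp
  · simp

theorem formMul_ne_zero {a b : ℕ} {f : Fin (a + 1) → k} {g : Fin (b + 1) → k}
    (hf : f ≠ 0) (hg : g ≠ 0) : formMul f g ≠ 0 := fun h => by
  have := toPoly_formMul f g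
  rw [h, map_zero] at this
  exact mul_ne_zero (toPoly_ne_zero hf) (toPoly_ne_zero hg) this.symm

/-- Multiplication by a fixed form, as a linear map. -/
def mulLeft {a : ℕ} (b : ℕ) (f : Fin (a + 1) → k) :
    (Fin (b + 1) → k) →ₗ[k] (Fin (a + b + 1) → k) where
  toFun g := formMul f g
  map_add' g h := by
    ext i
    simp only [formMul, Pi.add_apply, ← Finset.sum_add_distrib]
    exact Finset.sum_congr rfl fun q _ => by split_ifs <;> ring
  map_smul' c g := by
    ext i
    simp only [formMul, Pi.smul_apply, smul_eq_mul, Finset.mul_sum, RingHom.id_apply]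
    exact Finset.sum_congr rfl fun q _ => by split_ifs <;> ring

theorem mulLeft_injective {a : ℕ} (b : ℕ) {f : Fin (a + 1) → k} (hf : f ≠ 0) :
    Function.Injective (mulLeft b f) := by
  rw [injective_iff_map_eq_zero]
  intro g hg
  by_contra hne
  exact formMul_ne_zero hf hne hg

theorem smul_formMul {a b : ℕ} (c : k) (f : Fin (a + 1) → k) (g : Fin (b + 1) → k) :
    formMul (c • f) g = c • formMul f g := by
  ext i
  simp only [formMul, Pi.smul_apply, smul_eq_mul, Finset.mul_sum]
  exact Finset.sum_congr rfl fun q _ => by split_ifs <;> ring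

theorem formMul_smul {a b : ℕ} (c : k) (f : Fin (a + 1) → k) (g : Fin (b + 1) → k) :
    formMul f (c • g) = c • formMul f g := (mulLeft b f).map_smul c g

theorem exists_isHomogeneous_eq_mul {m n : ℕ} {f v : MvPolynomial (Fin 2) k}
    (hf : f.IsHomogeneous m) (hv : v.IsHomogeneous (m + n)) (h : f ∣ v) :
    ∃ g, g.IsHomogeneous n ∧ v = f * g := by
  obtain ⟨g, rfl⟩ := h
  refine ⟨homogeneousComponent n g, homogeneousComponent_isHomogeneous n g, ?_⟩
  let _ := gradedAlgebra (σ := Fin 2) (R := k)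
  have h := DirectSum.coe_decompose_mul_of_left_mem_of_le
    (𝒜 := homogeneousSubmodule (Fin 2) k) (b := g) hf (Nat.le_add_right m n)
  rw [Nat.add_sub_cancel_left] at h
  have e (r : MvPolynomial (Fin 2) k) (i : ℕ) :
      (DirectSum.decompose (homogeneousSubmodule (Fin 2) k) r i : MvPolynomial (Fin 2) k) =
        homogeneousComponent i r := decomposition.decompose'_apply r i
  rwa [e, e, homogeneousComponent_eq_self hv] at h

theorem toPoly_dvd_iff {a b : ℕ} {f : Fin (a + 1) → k} {v : Fin (a + b + 1) → k} :
    toPoly a f ∣ toPoly (a + b) v ↔ ∃ h : Fin (b + 1) → k, v = formMul f h := by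
  constructor
  · intro h
    obtain ⟨g, hg, he⟩ :=
      exists_isHomogeneous_eq_mul (isHomogeneous_toPoly a f) (isHomogeneous_toPoly _ v) h
    obtain ⟨g, rfl⟩ := exists_toPoly_eq hg
    exact ⟨g, toPoly_injective _ (by rw [he, toPoly_formMul])⟩
  · rintro ⟨g, rfl⟩
    exact ⟨_, toPoly_formMul f g⟩

theorem mk_eq_mk_of_dvd {n : ℕ} {f g : Fin (n + 1) → k} (hf : f ≠ 0) (hg : g ≠ 0)
    (h : toPoly n f ∣ toPoly n g) : Projectivization.mk k f hf = Projectivization.mk k g hg := by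
  obtain ⟨c, hc, he⟩ :=
    exists_isHomogeneous_eq_mul (n := 0) (isHomogeneous_toPoly n f) (isHomogeneous_toPoly n g) h
  rw [← totalDegree_zero_iff_isHomogeneous, totalDegree_eq_zero_iff_eq_C] at hc
  rw [eq_comm, Projectivization.mk_eq_mk_iff']
  refine ⟨coeff 0 c, toPoly_injective n ?_⟩
  rw [map_smul, he, smul_eq_C_mul, ← hc, mul_comm]

theorem isUnit_of_totalDegree_eq_zero {a : MvPolynomial (Fin 2) k} (ha : a ≠ 0)
    (h : a.totalDegree = 0) : IsUnit a := by
  rw [totalDegree_eq_zero_iff_eq_C] at h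
  rw [h]
  refine IsUnit.map C (isUnit_iff_ne_zero.mpr fun h0 => ha ?_)
  rw [h, h0, C_0]

theorem prime_toPoly {l : Fin 2 → k} (hl : l ≠ 0) : Prime (toPoly 1 l) := by
  rw [← irreducible_iff_prime]
  refine ⟨fun h => ?_, fun a b hab => ?_⟩
  · obtain ⟨u, hu⟩ := h
    have h1 := totalDegree_toPoly (n := 1) hl
    have h2 : (toPoly 1 l * ((u⁻¹ : _ˣ) : MvPolynomial (Fin 2) k)).totalDegree = 0 := by
      rw [← hu]; simp
    rw [totalDegree_mul_of_isDomain (toPoly_ne_zero (n := 1) hl) (Units.ne_zero _)] at h2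
    omega
  · have h0 := toPoly_ne_zero (n := 1) hl
    rw [hab] at h0
    have h1 := totalDegree_toPoly (n := 1) hl
    rw [hab, totalDegree_mul_of_isDomain (left_ne_zero_of_mul h0) (right_ne_zero_of_mul h0)] at h1
    rcases (by omega : a.totalDegree = 0 ∨ b.totalDegree = 0) with h | h
    · exact Or.inl (isUnit_of_totalDegree_eq_zero (left_ne_zero_of_mul h0) h)
    · exact Or.inr (isUnit_of_totalDegree_eq_zero (right_ne_zero_of_mul h0) h)

theorem exists_linear_dvd_of_not_irreducible {q : Fin 3 → k} (hq : q ≠ 0)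
    (h : ¬ Irreducible (toPoly 2 q)) : ∃ l : Fin 2 → k, l ≠ 0 ∧ toPoly 1 l ∣ toPoly 2 q := by
  have h0 := toPoly_ne_zero (n := 2) hq
  have hu : ¬ IsUnit (toPoly 2 q) := fun hu => by
    obtain ⟨u, hu⟩ := hu
    have h1 := totalDegree_toPoly (n := 2) hq
    have h2 : (toPoly 2 q * ((u⁻¹ : _ˣ) : MvPolynomial (Fin 2) k)).totalDegree = 0 := by
      rw [← hu]; simp
    rw [totalDegree_mul_of_isDomain h0 (Units.ne_zero _)] at h2
    omega
  rw [irreducible_iff] at h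
  push Not at h
  obtain ⟨a, b, hab, ha, hb⟩ := h hu
  have hab0 := h0
  rw [hab] at hab0
  have ha0 := left_ne_zero_of_mul hab0
  have hb0 := right_ne_zero_of_mul hab0
  have hdeg := totalDegree_toPoly (n := 2) hq
  rw [hab, totalDegree_mul_of_isDomain ha0 hb0] at hdeg
  have ha1 : a.totalDegree ≠ 0 := fun h => ha (isUnit_of_totalDegree_eq_zero ha0 h)
  have hb1 : b.totalDegree ≠ 0 := fun h => hb (isUnit_of_totalDegree_eq_zero hb0 h)
  have key : ∀ c : MvPolynomial (Fin 2) k, c.totalDegree = 1 →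
      c = homogeneousComponent 0 c + homogeneousComponent 1 c := fun c hc => by
    conv_lhs => rw [← sum_homogeneousComponent c, hc]
    simp [Finset.sum_range_succ]
  set a0 := homogeneousComponent 0 a with ha0'
  set a1 := homogeneousComponent 1 a with ha1'
  set b0 := homogeneousComponent 0 b
  set b1 := homogeneousComponent 1 b
  have ea : a = a0 + a1 := key a (by omega)
  have eb : b = b0 + b1 := key b (by omega)
  have i0 : a0.IsHomogeneous 0 := homogeneousComponent_isHomogeneous 0 a
  have i1 : a1.IsHomogeneous 1 := homogeneousComponent_isHomogeneous 1 a
  have j0 : b0.IsHomogeneous 0 := homogeneousComponent_isHomogeneous 0 b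
  have j1 : b1.IsHomogeneous 1 := homogeneousComponent_isHomogeneous 1 b
  have e : toPoly 2 q = a1 * b1 := by
    have h2 := homogeneousComponent_eq_self (isHomogeneous_toPoly 2 q)
    rw [hab, ea, eb, show (a0 + a1) * (b0 + b1) = a0 * b0 + a0 * b1 + a1 * b0 + a1 * b1 by ring]
      at h2
    simp only [map_add] at h2
    rw [homogeneousComponent_of_mem (i0.mul j0), homogeneousComponent_of_mem (i0.mul j1),
      homogeneousComponent_of_mem (i1.mul j0), homogeneousComponent_of_mem (i1.mul j1)] at h2
    rw [hab, ea, eb, show (a0 + a1) * (b0 + b1) = a0 * b0 + a0 * b1 + a1 * b0 + a1 * b1 by ring,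
      ← h2]
    simp
  obtain ⟨l, hl⟩ := exists_toPoly_eq i1
  refine ⟨l, ?_, ?_⟩
  · rintro rfl
    rw [map_zero] at hl
    exact h0 (by rw [e, ← hl, zero_mul])
  · rw [hl, e]
    exact dvd_mul_right _ _

theorem aeval_toPoly_coeff {n : ℕ} {F : Polynomial k} (hF : F.natDegree ≤ n) :
    aeval ![1, Polynomial.X] (toPoly n fun i => F.coeff i) = F := by
  rw [aeval_toPoly, Fin.sum_univ_eq_sum_range
    (fun i => Polynomial.C (F.coeff i) * Polynomial.X ^ i) (n + 1)]
  exact (F.as_sum_range_C_mul_X_pow' (Nat.lt_succ_of_le hF)).symm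

theorem eq_of_aeval_toPoly_eq {n : ℕ} {f g : Fin (n + 1) → k}
    (h : (aeval ![1, Polynomial.X] (toPoly n f) : Polynomial k) =
      aeval ![1, Polynomial.X] (toPoly n g)) : f = g := by
  ext i
  rw [← coeff_aeval_toPoly n f i, h, coeff_aeval_toPoly]

theorem sq_toPoly_dvd_iff {a b : ℕ} {f : Fin (a + 1) → k} {v : Fin (a + a + b + 1) → k} :
    toPoly a f ^ 2 ∣ toPoly (a + a + b) v ↔
      ∃ h : Fin (b + 1) → k, v = formMul (formMul f f) h := by
  rw [← toPoly_dvd_iff, toPoly_formMul, sq]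

theorem isSingularQuintic_iff_exists_dvd {v : Fin 6 → k} (hv : v ≠ 0) :
    IsSingularQuintic v ↔ ∃ l : Fin 2 → AlgebraicClosure k, l ≠ 0 ∧
      toPoly 1 l ^ 2 ∣ toPoly 5 fun i => algebraMap k (AlgebraicClosure k) (v i) := by
  simp only [IsSingularQuintic, exists_and_left, ne_eq, hv, not_false_eq_true, true_and]
  exact exists_congr fun l => and_congr_right fun _ => (sq_toPoly_dvd_iff (a := 1) (b := 3)).symm

theorem toPoly_map {K : Type*} [Field K] (σ : k →+* K) (n : ℕ) (f : Fin (n + 1) → k) :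
    toPoly n (fun i => σ (f i)) = map σ (toPoly n f) := by
  simp [toPoly_apply]

theorem exists_linear_dvd [IsAlgClosed k] (q : Fin 3 → k) :
    ∃ l : Fin 2 → k, l ≠ 0 ∧ toPoly 1 l ∣ toPoly 2 q := by
  by_cases h2 : q 2 = 0
  · refine ⟨![1, 0], by simp, (toPoly_dvd_iff (a := 1) (b := 1)).mpr ⟨![q 0, q 1], ?_⟩⟩
    ext i
    fin_cases i <;> simp [formMul, Fintype.sum_prod_type, Fin.sum_univ_succ, h2]
  · obtain ⟨t, ht⟩ := IsAlgClosed.exists_root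
      (Polynomial.C (q 2) * Polynomial.X ^ 2 + Polynomial.C (q 1) * Polynomial.X +
        Polynomial.C (q 0)) (by rw [Polynomial.degree_quadratic h2]; decide)
    simp only [Polynomial.IsRoot.def, Polynomial.eval_add, Polynomial.eval_mul,
      Polynomial.eval_C, Polynomial.eval_pow, Polynomial.eval_X] at ht
    refine ⟨![-t, 1], by simp, (toPoly_dvd_iff (a := 1) (b := 1)).mpr
      ⟨![q 1 + t * q 2, q 2], ?_⟩⟩
    ext i
    fin_cases i <;> simp [formMul, Fintype.sum_prod_type, Fin.sum_univ_succ]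
    linear_combination ht

theorem exists_sq_dvd_of_isAlgebraic [PerfectField k] {K : Type*} [Field K] [Algebra k K]
    [Algebra.IsAlgebraic k K] {v : Fin 6 → k} (hv : v ≠ 0) {l : Fin 2 → K} {c : Fin 4 → K}
    (he : (fun i => algebraMap k K (v i)) = formMul (formMul l l) c) :
    (∃ l : Fin 2 → k, l ≠ 0 ∧ toPoly 1 l ^ 2 ∣ toPoly 5 v) ∨
      ∃ q : Fin 3 → k, q ≠ 0 ∧ toPoly 2 q ^ 2 ∣ toPoly 5 v := by
  by_cases hl1 : l 1 = 0
  · left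
    refine ⟨![1, 0], by simp, (sq_toPoly_dvd_iff (a := 1) (b := 3)).mpr
      ⟨![v 0, v 1, v 2, v 3], ?_⟩⟩
    have h5 : v 5 = 0 := by
      have := congrFun he 5
      simpa [formMul, Fintype.sum_prod_type, Fin.sum_univ_succ, hl1] using this
    have h4 : v 4 = 0 := by
      have := congrFun he 4
      simpa [formMul, Fintype.sum_prod_type, Fin.sum_univ_succ, hl1] using this
    ext i
    fin_cases i <;> simp [formMul, Fintype.sum_prod_type, Fin.sum_univ_succ, h4, h5]
  · set P : Polynomial k := aeval ![1, Polynomial.X] (toPoly 5 v) with hP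
    have hP0 : P ≠ 0 := fun h0 => hv (eq_of_aeval_toPoly_eq (by rw [← hP, h0]; simp))
    have hmap : P.map (algebraMap k K) =
        (Polynomial.C (l 0) + Polynomial.C (l 1) * Polynomial.X) ^ 2 *
          aeval ![1, Polynomial.X] (toPoly 3 c) := by
      have h1 : P.map (algebraMap k K) =
          aeval ![1, Polynomial.X] (toPoly 5 fun i => algebraMap k K (v i)) := by
        rw [hP, aeval_toPoly, aeval_toPoly]
        simp [Polynomial.map_sum]
      have h2 : toPoly 5 (fun i => algebraMap k K (v i)) = toPoly 1 l ^ 2 * toPoly 3 c := by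
        rw [he, sq]
        exact (toPoly_formMul (a := 1 + 1) (b := 3) _ _).trans (by rw [toPoly_formMul])
      rw [h1, h2, map_mul, map_pow, aeval_toPoly 1 l]
      simp
    set a : K := -l 0 / l 1
    have ha : l 0 + l 1 * a = 0 := by
      simp only [a]
      field_simp
      simp
    have hroot : Polynomial.aeval a P = 0 := by
      rw [← Polynomial.aeval_map_algebraMap K, hmap]
      simp [ha]
    have hroot' : Polynomial.aeval a P.derivative = 0 := by
      rw [← Polynomial.aeval_map_algebraMap K, ← Polynomial.derivative_map, hmap]
      simp [ha, sq]
    have hint : IsIntegral k a := Algebra.IsIntegral.isIntegral a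
    have hsep : (minpoly k a).Separable :=
      PerfectField.separable_of_irreducible (minpoly.irreducible hint)
    obtain ⟨u, hu⟩ := minpoly.dvd k a hroot
    have hua : Polynomial.aeval a u = 0 := by
      rw [hu] at hroot'
      simpa [hsep.aeval_derivative_ne_zero (minpoly.aeval k a)] using hroot'
    obtain ⟨t, ht⟩ := minpoly.dvd k a hua
    set m := minpoly k a
    have hm0 : m ≠ 0 := minpoly.ne_zero hint
    have hmpos : 0 < m.natDegree := minpoly.natDegree_pos hint
    rw [ht] at hu
    have ht0 : t ≠ 0 := by
      rintro rfl
      exact hP0 (by simp [hu])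
    have hdeg : m.natDegree + (m.natDegree + t.natDegree) ≤ 5 := by
      rw [← Polynomial.natDegree_mul hm0 ht0, ← Polynomial.natDegree_mul hm0
        (mul_ne_zero hm0 ht0), ← hu]
      exact natDegree_aeval_toPoly_le 5 v
    have key : ∀ d e : ℕ, ∀ v : Fin (d + d + e + 1) → k,
        aeval ![1, Polynomial.X] (toPoly _ v) = P → m.natDegree ≤ d → t.natDegree ≤ e →
        ∃ q : Fin (d + 1) → k, q ≠ 0 ∧ toPoly d q ^ 2 ∣ toPoly (d + d + e) v := by
      intro d e v hv hd he
      refine ⟨fun i => m.coeff i, fun h0 => hm0 ?_, sq_toPoly_dvd_iff.mpr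
        ⟨fun i => t.coeff i, eq_of_aeval_toPoly_eq ?_⟩⟩
      · rw [← aeval_toPoly_coeff hd, h0, map_zero, map_zero]
      · rw [hv, toPoly_formMul, toPoly_formMul, map_mul, map_mul, aeval_toPoly_coeff hd,
          aeval_toPoly_coeff he, hu, mul_assoc]
    rcases (by omega : m.natDegree = 1 ∨ m.natDegree = 2) with hd | hd
    · exact Or.inl (key 1 3 v hP.symm (by omega) (by omega))
    · exact Or.inr (key 2 1 v hP.symm (by omega) (by omega))

theorem isSingularQuintic_iff [PerfectField k] {v : Fin 6 → k} (hv : v ≠ 0) :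
    IsSingularQuintic v ↔
      (∃ l : Fin 2 → k, l ≠ 0 ∧ toPoly 1 l ^ 2 ∣ toPoly 5 v) ∨
        ∃ q : Fin 3 → k, q ≠ 0 ∧ toPoly 2 q ^ 2 ∣ toPoly 5 v := by
  refine ⟨fun ⟨_, _, _, _, he⟩ => exists_sq_dvd_of_isAlgebraic hv he, fun h => ?_⟩
  rw [isSingularQuintic_iff_exists_dvd hv, toPoly_map]
  set σ := algebraMap k (AlgebraicClosure k)
  rcases h with ⟨l, hl, h⟩ | ⟨q, -, h⟩
  · refine ⟨fun i => σ (l i), fun h0 => hl ?_, ?_⟩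
    · ext i
      simpa using congrFun h0 i
    · rw [toPoly_map, ← map_pow]
      exact map_dvd _ h
  · obtain ⟨l, hl, hlq⟩ := exists_linear_dvd fun i => σ (q i)
    refine ⟨l, hl, (pow_dvd_pow_of_dvd hlq 2).trans ?_⟩
    rw [toPoly_map, ← map_pow]
    exact map_dvd _ h

open scoped LinearAlgebra.Projectivization

theorem associated_toPoly_mk_rep {n : ℕ} {f : Fin (n + 1) → k} (hf : f ≠ 0) :
    Associated (toPoly n f) (toPoly n (Projectivization.mk k f hf).rep) := by
  obtain ⟨a, ha⟩ := Projectivization.exists_smul_eq_mk_rep k f hf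
  rw [← ha, Units.smul_def, map_smul, smul_eq_C_mul, mul_comm]
  exact ⟨Units.map C.toMonoidHom a, rfl⟩

theorem eq_of_toPoly_rep_dvd {n : ℕ} {x y : ℙ k (Fin (n + 1) → k)}
    (h : toPoly n x.rep ∣ toPoly n y.rep) : x = y := by
  rw [← x.mk_rep, ← y.mk_rep]
  exact mk_eq_mk_of_dvd _ _ h

theorem isRelPrime_toPoly_rep {x : ℙ k (Fin 2 → k)} {r : MvPolynomial (Fin 2) k}
    (h : ¬ toPoly 1 x.rep ∣ r) : IsRelPrime (toPoly 1 x.rep) r :=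
  (prime_toPoly x.rep_nonzero).irreducible.isRelPrime_iff_not_dvd.mpr h

theorem le_of_isHomogeneous_dvd {m n : ℕ} {v : Fin (n + 1) → k} (hv : v ≠ 0)
    {r : MvPolynomial (Fin 2) k} (hr : r.IsHomogeneous m) (h : r ∣ toPoly n v) : m ≤ n := by
  have hV := toPoly_ne_zero hv
  rw [← totalDegree_toPoly hv, ← hr.totalDegree (ne_zero_of_dvd_ne_zero hV h)]
  exact totalDegree_le_of_dvd_of_isDomain h hV

/-- The classes of forms of degree `n` whose square divides the quintic form `v`. -/
def squareDivisors (n : ℕ) (v : Fin 6 → k) : Set (ℙ k (Fin (n + 1) → k)) :=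
  {x | toPoly n x.rep ^ 2 ∣ toPoly 5 v}

/-- The pairs of classes of linear forms such that the square of the product divides `v`. -/
def squareDivisorPairs (v : Fin 6 → k) : Set (ℙ k (Fin 2 → k) × ℙ k (Fin 2 → k)) :=
  {x | (toPoly 1 x.1.rep * toPoly 1 x.2.rep) ^ 2 ∣ toPoly 5 v}

theorem mk_mem_squareDivisors {n : ℕ} {v : Fin 6 → k} {f : Fin (n + 1) → k} (hf : f ≠ 0) :
    Projectivization.mk k f hf ∈ squareDivisors n v ↔ toPoly n f ^ 2 ∣ toPoly 5 v :=
  ((associated_toPoly_mk_rep hf).pow_pow).dvd_iff_dvd_left.symm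

theorem isSingularQuintic_iff_nonempty [PerfectField k] {v : Fin 6 → k} (hv : v ≠ 0) :
    IsSingularQuintic v ↔ (squareDivisors 1 v).Nonempty ∨ (squareDivisors 2 v).Nonempty := by
  rw [isSingularQuintic_iff hv]
  refine or_congr ⟨?_, ?_⟩ ⟨?_, ?_⟩
  · exact fun ⟨l, hl, h⟩ => ⟨_, (mk_mem_squareDivisors (n := 1) hl).mpr h⟩
  · exact fun ⟨x, hx⟩ => ⟨x.rep, x.rep_nonzero, hx⟩
  · exact fun ⟨l, hl, h⟩ => ⟨_, (mk_mem_squareDivisors (n := 2) hl).mpr h⟩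
  · exact fun ⟨x, hx⟩ => ⟨x.rep, x.rep_nonzero, hx⟩

theorem fst_mem_of_mem_squareDivisorPairs {v : Fin 6 → k}
    {z : ℙ k (Fin 2 → k) × ℙ k (Fin 2 → k)} (hz : z ∈ squareDivisorPairs v) :
    z.1 ∈ squareDivisors 1 v :=
  (pow_dvd_pow_of_dvd (dvd_mul_right _ _) 2).trans hz

theorem snd_mem_of_mem_squareDivisorPairs {v : Fin 6 → k}
    {z : ℙ k (Fin 2 → k) × ℙ k (Fin 2 → k)} (hz : z ∈ squareDivisorPairs v) :
    z.2 ∈ squareDivisors 1 v :=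
  (pow_dvd_pow_of_dvd (dvd_mul_left _ _) 2).trans hz

theorem swap_mem_squareDivisorPairs {v : Fin 6 → k} {x y : ℙ k (Fin 2 → k)}
    (h : (x, y) ∈ squareDivisorPairs v) : (y, x) ∈ squareDivisorPairs v := by
  rw [squareDivisorPairs, Set.mem_ofPred_eq, mul_comm]
  exact h

theorem toPoly_two_formMul (f g : Fin 2 → k) :
    toPoly 2 (formMul f g) = toPoly 1 f * toPoly 1 g :=
  toPoly_formMul (a := 1) (b := 1) f g

/-- The class of the product of two linear forms. -/
noncomputable def mulClass (x y : ℙ k (Fin 2 → k)) : ℙ k (Fin 3 → k) :=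
  Projectivization.mk k (formMul x.rep y.rep : Fin 3 → k)
    (formMul_ne_zero (a := 1) (b := 1) x.rep_nonzero y.rep_nonzero)

theorem mulClass_mem {v : Fin 6 → k} {x y : ℙ k (Fin 2 → k)}
    (h : (x, y) ∈ squareDivisorPairs v) :
    mulClass x y ∈ squareDivisors 2 v := by
  refine (mk_mem_squareDivisors (n := 2) _).mpr ?_
  rw [toPoly_two_formMul]
  exact h

theorem eq_mulClass {x y : ℙ k (Fin 2 → k)} {q : ℙ k (Fin 3 → k)}
    (h : toPoly 1 x.rep * toPoly 1 y.rep ∣ toPoly 2 q.rep) :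
    q = mulClass x y := by
  rw [← q.mk_rep, eq_comm]
  refine mk_eq_mk_of_dvd (n := 2) _ _ ?_
  rwa [toPoly_two_formMul]

theorem linear_dvd_of_mem_squareDivisors {v : Fin 6 → k} (hv : v ≠ 0) {x : ℙ k (Fin 2 → k)}
    {q : ℙ k (Fin 3 → k)} (hx : x ∈ squareDivisors 1 v) (hq : q ∈ squareDivisors 2 v) :
    toPoly 1 x.rep ∣ toPoly 2 q.rep := by
  by_contra h
  have := le_of_isHomogeneous_dvd hv
    (((isHomogeneous_toPoly 1 x.rep).pow 2).mul ((isHomogeneous_toPoly 2 q.rep).pow 2))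
    ((isRelPrime_toPoly_rep h).pow_left.pow_right.mul_dvd hx hq)
  omega

theorem isRelPrime_toPoly_rep_of_ne {x y : ℙ k (Fin 2 → k)} (h : x ≠ y) :
    IsRelPrime (toPoly 1 x.rep) (toPoly 1 y.rep) :=
  isRelPrime_toPoly_rep fun hd => h (eq_of_toPoly_rep_dvd hd)

theorem mem_squareDivisorPairs_of_ne {v : Fin 6 → k} {x y : ℙ k (Fin 2 → k)} (h : x ≠ y)
    (hx : x ∈ squareDivisors 1 v) (hy : y ∈ squareDivisors 1 v) :
    (x, y) ∈ squareDivisorPairs v := by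
  rw [squareDivisorPairs, Set.mem_ofPred_eq, mul_pow]
  exact (isRelPrime_toPoly_rep_of_ne h).pow_left.pow_right.mul_dvd hx hy

theorem not_mem_squareDivisorPairs_self {v : Fin 6 → k} (hv : v ≠ 0) {x y : ℙ k (Fin 2 → k)}
    (h : x ≠ y) (hy : y ∈ squareDivisors 1 v) : (x, x) ∉ squareDivisorPairs v := by
  intro hx
  have hr := isRelPrime_toPoly_rep_of_ne h
  have := le_of_isHomogeneous_dvd hv
    ((((isHomogeneous_toPoly 1 x.rep).mul (isHomogeneous_toPoly 1 x.rep)).pow 2).mul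
      ((isHomogeneous_toPoly 1 y.rep).pow 2))
    ((hr.mul_left hr).pow_left.pow_right.mul_dvd hx hy)
  omega

theorem eq_or_eq_of_mem_squareDivisors {v : Fin 6 → k} (hv : v ≠ 0) {x y z : ℙ k (Fin 2 → k)}
    (h : x ≠ y) (hx : x ∈ squareDivisors 1 v) (hy : y ∈ squareDivisors 1 v)
    (hz : z ∈ squareDivisors 1 v) : z = x ∨ z = y := by
  by_contra! hne
  have := le_of_isHomogeneous_dvd hv
    ((((isHomogeneous_toPoly 1 x.rep).mul (isHomogeneous_toPoly 1 y.rep)).pow 2).mul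
      ((isHomogeneous_toPoly 1 z.rep).pow 2))
    (((isRelPrime_toPoly_rep_of_ne hne.1.symm).mul_left
      (isRelPrime_toPoly_rep_of_ne hne.2.symm)).pow_left.pow_right.mul_dvd
        (mem_squareDivisorPairs_of_ne h hx hy) hz)
  omega

theorem ncard_of_two {v : Fin 6 → k} (hv : v ≠ 0) {x y : ℙ k (Fin 2 → k)} (h : x ≠ y)
    (hx : x ∈ squareDivisors 1 v) (hy : y ∈ squareDivisors 1 v) :
    (squareDivisors 1 v).ncard = 2 ∧ (squareDivisors 2 v).ncard = 1 ∧
      (squareDivisorPairs v).ncard = 2 := by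
  have hxy := mem_squareDivisorPairs_of_ne h hx hy
  refine ⟨?_, ?_, ?_⟩
  · rw [show squareDivisors 1 v = {x, y} from Set.Subset.antisymm
      (fun z hz => eq_or_eq_of_mem_squareDivisors hv h hx hy hz)
      (Set.insert_subset hx (Set.singleton_subset_iff.mpr hy)), Set.ncard_pair h]
  · rw [Set.ncard_eq_one]
    refine ⟨mulClass x y, Set.eq_singleton_iff_unique_mem.mpr ⟨mulClass_mem hxy, fun q hq => ?_⟩⟩
    exact eq_mulClass ((isRelPrime_toPoly_rep_of_ne h).mul_dvd
      (linear_dvd_of_mem_squareDivisors hv hx hq) (linear_dvd_of_mem_squareDivisors hv hy hq))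
  · rw [show squareDivisorPairs v = {(x, y), (y, x)} from Set.Subset.antisymm ?_
      (Set.insert_subset hxy
        (Set.singleton_subset_iff.mpr (swap_mem_squareDivisorPairs hxy))),
      Set.ncard_pair (by simp [h])]
    rintro ⟨a, b⟩ hab
    have ha := fst_mem_of_mem_squareDivisorPairs hab
    have hb := snd_mem_of_mem_squareDivisorPairs hab
    dsimp only at ha hb
    rcases eq_or_eq_of_mem_squareDivisors hv h hx hy ha with rfl | rfl <;>
    rcases eq_or_eq_of_mem_squareDivisors hv h hx hy hb with rfl | rfl
    · exact (not_mem_squareDivisorPairs_self hv h hy hab).elim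
    · simp
    · simp
    · exact (not_mem_squareDivisorPairs_self hv h.symm hx hab).elim

theorem ncard_of_one {v : Fin 6 → k} (hv : v ≠ 0) {x : ℙ k (Fin 2 → k)}
    (hx : squareDivisors 1 v = {x}) :
    (squareDivisors 2 v).ncard = (squareDivisorPairs v).ncard := by
  have hx' : x ∈ squareDivisors 1 v := by simp [hx]
  have hpairs : squareDivisorPairs v ⊆ {(x, x)} := fun z hz => by
    have h1 := fst_mem_of_mem_squareDivisorPairs hz
    have h2 := snd_mem_of_mem_squareDivisorPairs hz
    rw [hx] at h1 h2
    exact Prod.ext h1 h2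
  have hdvd : ∀ q ∈ squareDivisors 2 v, toPoly 1 x.rep * toPoly 1 x.rep ∣ toPoly 2 q.rep := by
    intro q hq
    obtain ⟨r, hr, he⟩ := exists_isHomogeneous_eq_mul (n := 1) (isHomogeneous_toPoly 1 x.rep)
      (isHomogeneous_toPoly 2 q.rep) (linear_dvd_of_mem_squareDivisors hv hx' hq)
    obtain ⟨l, rfl⟩ := exists_toPoly_eq hr
    have hl : l ≠ 0 := by
      rintro rfl
      exact toPoly_ne_zero (n := 2) q.rep_nonzero (by rw [he]; simp)
    have hmem : Projectivization.mk k l hl ∈ squareDivisors 1 v := by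
      rw [mk_mem_squareDivisors]
      exact (pow_dvd_pow_of_dvd (he ▸ dvd_mul_left _ _) 2).trans hq
    rw [hx, Set.mem_singleton_iff] at hmem
    rw [he, ← hmem]
    exact mul_dvd_mul_left _ (associated_toPoly_mk_rep hl).symm.dvd
  by_cases h : (x, x) ∈ squareDivisorPairs v
  · rw [hpairs.antisymm (Set.singleton_subset_iff.mpr h), Set.ncard_singleton, Set.ncard_eq_one]
    exact ⟨mulClass x x, Set.eq_singleton_iff_unique_mem.mpr
      ⟨mulClass_mem h, fun q hq => eq_mulClass (hdvd q hq)⟩⟩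
  · have h1 : squareDivisorPairs v = ∅ := Set.eq_empty_of_forall_notMem fun z hz =>
      h ((hpairs hz : z = (x, x)) ▸ hz)
    have h2 : squareDivisors 2 v = ∅ := Set.eq_empty_of_forall_notMem fun q hq =>
      h ((pow_dvd_pow_of_dvd (hdvd q hq) 2).trans hq)
    rw [h1, h2, Set.ncard_empty, Set.ncard_empty]

theorem subsingleton_of_empty {v : Fin 6 → k} (hv : v ≠ 0) (h : squareDivisors 1 v = ∅) :
    (squareDivisors 2 v).Subsingleton := by
  intro q hq r hr
  have hirr : Irreducible (toPoly 2 q.rep) := by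
    by_contra hirr
    obtain ⟨l, hl, hd⟩ := exists_linear_dvd_of_not_irreducible q.rep_nonzero hirr
    have : Projectivization.mk k l hl ∈ squareDivisors 1 v := by
      rw [mk_mem_squareDivisors]
      exact (pow_dvd_pow_of_dvd hd 2).trans hq
    simp [h] at this
  refine eq_of_toPoly_rep_dvd ?_
  by_contra hd
  have := le_of_isHomogeneous_dvd hv
    (((isHomogeneous_toPoly 2 q.rep).pow 2).mul ((isHomogeneous_toPoly 2 r.rep).pow 2))
    ((hirr.isRelPrime_iff_not_dvd.mpr hd).pow_left.pow_right.mul_dvd hq hr)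
  omega

open scoped Classical in
theorem ncard_squareDivisors [PerfectField k] {v : Fin 6 → k} (hv : v ≠ 0) :
    (squareDivisors 1 v).ncard + (squareDivisors 2 v).ncard =
      (squareDivisorPairs v).ncard + if IsSingularQuintic v then 1 else 0 := by
  rw [if_congr (isSingularQuintic_iff_nonempty hv) rfl rfl]
  rcases (squareDivisors 1 v).eq_empty_or_nonempty with h | ⟨x, hx⟩
  · have hp : squareDivisorPairs v = ∅ := Set.eq_empty_of_forall_notMem fun z hz => by
      have := fst_mem_of_mem_squareDivisorPairs hz
      simp [h] at this
    rcases (subsingleton_of_empty hv h).eq_empty_or_singleton with h2 | ⟨q, h2⟩ <;>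
      simp [h, hp, h2]
  · rw [if_pos (Or.inl ⟨x, hx⟩)]
    by_cases h : ∃ y ∈ squareDivisors 1 v, x ≠ y
    · obtain ⟨y, hy, hxy⟩ := h
      obtain ⟨h1, h2, h3⟩ := ncard_of_two hv hxy hx hy
      rw [h1, h2, h3]
    · push Not at h
      have h1 : squareDivisors 1 v = {x} :=
        Set.eq_singleton_iff_unique_mem.mpr ⟨hx, fun y hy => (h y hy).symm⟩
      rw [ncard_of_one hv h1, h1, Set.ncard_singleton, add_comm]

theorem pair_smul {n : ℕ} (c : k) (w v : Fin (n + 1) → k) : pair w (c • v) = c * pair w v := by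
  simp only [pair, Pi.smul_apply, smul_eq_mul, Finset.mul_sum]
  exact Finset.sum_congr rfl fun i _ => by ring

/-- The pairing with a fixed element of the dual space, as an additive homomorphism. -/
def pairHom {n : ℕ} (w : Fin (n + 1) → k) : (Fin (n + 1) → k) →+ k where
  toFun v := pair w v
  map_zero' := by simp [pair]
  map_add' u v := by simp [pair, mul_add, Finset.sum_add_distrib]

/-- The form `f` of degree `a` is apolar to `w`. -/
def IsApolar {a b : ℕ} (w : Fin (a + b + 1) → k) (f : Fin (a + 1) → k) : Prop :=
  ∀ h : Fin (b + 1) → k, pair w (formMul f h) = 0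

theorem isApolar_smul {a b : ℕ} {w : Fin (a + b + 1) → k} {f : Fin (a + 1) → k} {c : k}
    (hc : c ≠ 0) : IsApolar (b := b) w (c • f) ↔ IsApolar (b := b) w f := by
  simp [IsApolar, smul_formMul, pair_smul, hc]

theorem isApolar_sq_mk_rep {a b : ℕ} {w : Fin (a + a + b + 1) → k} {f : Fin (a + 1) → k}
    (hf : f ≠ 0) {x : ℙ k (Fin (a + 1) → k)} (hx : Projectivization.mk k f hf = x) :
    IsApolar (b := b) w (formMul x.rep x.rep) ↔ IsApolar (b := b) w (formMul f f) := by
  obtain ⟨c, hc⟩ := Projectivization.exists_smul_eq_mk_rep k f hf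
  rw [← hx, ← hc, Units.smul_def, smul_formMul, formMul_smul, isApolar_smul c.ne_zero,
    isApolar_smul c.ne_zero]

theorem isApolar_mul_sq_mk_rep {a b : ℕ} {w : Fin (a + a + (a + a) + b + 1) → k}
    {f g : Fin (a + 1) → k} (hf : f ≠ 0) (hg : g ≠ 0) {x y : ℙ k (Fin (a + 1) → k)}
    (hx : Projectivization.mk k f hf = x) (hy : Projectivization.mk k g hg = y) :
    IsApolar (b := b) w (formMul (formMul x.rep x.rep) (formMul y.rep y.rep)) ↔
      IsApolar (b := b) w (formMul (formMul f f) (formMul g g)) := by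
  obtain ⟨c, hc⟩ := Projectivization.exists_smul_eq_mk_rep k f hf
  obtain ⟨d, hd⟩ := Projectivization.exists_smul_eq_mk_rep k g hg
  rw [← hx, ← hc, ← hy, ← hd, Units.smul_def, Units.smul_def]
  simp only [smul_formMul, formMul_smul, isApolar_smul c.ne_zero, isApolar_smul d.ne_zero]

end Field

section ZMod

variable {p : ℕ} [Fact p.Prime]

open scoped LinearAlgebra.Projectivization

theorem pairHom_comp_stdAddChar_eq_zero_iff {a b : ℕ} (w : Fin (a + b + 1) → ZMod p)
    (f : Fin (a + 1) → ZMod p) :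
    (ZMod.stdAddChar (N := p)).compAddMonoidHom
      ((pairHom w).comp (mulLeft b f).toAddMonoidHom) = 0 ↔ IsApolar (b := b) w f := by
  rw [AddChar.eq_zero_iff]
  refine forall_congr' fun h => ?_
  rw [AddChar.compAddMonoidHom_apply, ← AddChar.map_zero_eq_one (ZMod.stdAddChar (N := p)),
    ZMod.injective_stdAddChar.eq_iff]
  rfl

open scoped Classical in
theorem sum_stdAddChar_of_dvd {a b : ℕ} (w : Fin (a + b + 1) → ZMod p)
    {f : Fin (a + 1) → ZMod p} (hf : f ≠ 0) :
    ∑ v : Fin (a + b + 1) → ZMod p,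
        (if toPoly a f ∣ toPoly (a + b) v then ZMod.stdAddChar (pair w v) else 0 : ℂ) =
      if IsApolar (b := b) w f then (p : ℂ) ^ (b + 1) else 0 := by
  have himage : univ.filter (fun v => toPoly a f ∣ toPoly (a + b) v) =
      univ.image (mulLeft b f) := by
    ext v
    simp only [mem_filter, mem_univ, true_and, mem_image, toPoly_dvd_iff]
    exact exists_congr fun h => eq_comm
  rw [← Finset.sum_filter, himage, Finset.sum_image (mulLeft_injective b hf).injOn,
    ← if_congr (pairHom_comp_stdAddChar_eq_zero_iff w f) rfl rfl]
  refine (AddChar.sum_eq_ite ((ZMod.stdAddChar (N := p)).compAddMonoidHom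
    ((pairHom w).comp (mulLeft b f).toAddMonoidHom))).trans ?_
  simp [ZMod.card]

open scoped Classical in
theorem sum_mul_ncard {V X : Type*} [Fintype V] [Finite X] (D : V → Set X) (A : X → Prop)
    (c : ℂ) (φ : V → ℂ)
    (h : ∀ x, ∑ v, (if x ∈ D v then φ v else 0) = if A x then c else 0) :
    ∑ v, φ v * ((D v).ncard : ℂ) = c * (Nat.card {x // A x} : ℂ) := by
  have := Fintype.ofFinite X
  have hncard : ∀ v, φ v * ((D v).ncard : ℂ) = ∑ x, if x ∈ D v then φ v else 0 := fun v => by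
    rw [Set.ncard_eq_toFinset_card', ← Finset.sum_filter, Finset.sum_const, nsmul_eq_mul, mul_comm]
    congr 3
    ext x
    simp
  simp_rw [hncard]
  rw [Finset.sum_comm]
  simp_rw [h]
  rw [← Finset.sum_filter, Finset.sum_const, nsmul_eq_mul, mul_comm, Nat.card_eq_fintype_card,
    Fintype.card_subtype]

open scoped Classical in
theorem indicator_eq_ncard (v : Fin 6 → ZMod p) :
    (if v = 0 ∨ IsSingularQuintic v then 1 else 0 : ℂ) =
      (squareDivisors 1 v).ncard + ((squareDivisors 2 v).ncard - (squareDivisorPairs v).ncard) := by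
  rcases eq_or_ne v 0 with rfl | hv
  · have h1 (n : ℕ) : squareDivisors n (0 : Fin 6 → ZMod p) = Set.univ :=
      Set.eq_univ_of_forall fun x => by simp [squareDivisors]
    have h2 : squareDivisorPairs (0 : Fin 6 → ZMod p) = Set.univ :=
      Set.eq_univ_of_forall fun x => by simp [squareDivisorPairs]
    rw [h1, h1, h2, Set.ncard_univ, Set.ncard_univ, Set.ncard_univ, Nat.card_prod,
      Projectivization.card_of_finrank (n := 2) _ _ (by simp),
      Projectivization.card_of_finrank (n := 3) _ _ (by simp)]
    simp [Finset.sum_range_succ]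
    ring
  · have h := congrArg (Nat.cast (R := ℂ)) (ncard_squareDivisors hv)
    push_cast at h
    simp only [hv, false_or]
    linear_combination -h

end ZMod

end BinaryForm

/-- `S(w) = p⁴·N₁ + p²·(N₂ - N₃)`, where `N₁`, `N₂`, `N₃` count projective classes of
linear forms `ℓ` with `ℓ²` apolar to `w`, quadratic forms `q` with `q²` apolar to `w`,
and pairs of linear forms `(ℓ₁,ℓ₂)` with `ℓ₁²ℓ₂²` apolar to `w`, respectively. -/
theorem stmt12 (p : ℕ) [Fact p.Prime] (w : Fin 6 → ZMod p) :
    expSum p w =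
      (p : ℂ) ^ 4 * (Nat.card {x : Projectivization (ZMod p) (Fin 2 → ZMod p) //
          ∃ (l : Fin 2 → ZMod p) (hl : l ≠ 0), Projectivization.mk (ZMod p) l hl = x ∧
            ∀ h : Fin 4 → ZMod p, pair w (formMul (formMul l l) h) = 0} : ℂ) +
      (p : ℂ) ^ 2 *
        ((Nat.card {x : Projectivization (ZMod p) (Fin 3 → ZMod p) //
            ∃ (q : Fin 3 → ZMod p) (hq : q ≠ 0), Projectivization.mk (ZMod p) q hq = x ∧
              ∀ h : Fin 2 → ZMod p, pair w (formMul (formMul q q) h) = 0} : ℂ) -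
         (Nat.card {x : Projectivization (ZMod p) (Fin 2 → ZMod p) ×
              Projectivization (ZMod p) (Fin 2 → ZMod p) //
            ∃ (l1 l2 : Fin 2 → ZMod p) (h1 : l1 ≠ 0) (h2 : l2 ≠ 0),
              Projectivization.mk (ZMod p) l1 h1 = x.1 ∧
              Projectivization.mk (ZMod p) l2 h2 = x.2 ∧
              ∀ h : Fin 2 → ZMod p,
                pair w (formMul (formMul (formMul l1 l1) (formMul l2 l2)) h) = 0} : ℂ)) := by
  classical
  have hS : expSum p w = ∑ v : Fin 6 → ZMod p, ZMod.stdAddChar (pair w v) *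
      (if v = 0 ∨ IsSingularQuintic v then 1 else 0 : ℂ) := by
    refine Finset.sum_congr rfl fun v _ => ?_
    rw [ZMod.stdAddChar_apply, ZMod.toCircle_apply, mul_ite, mul_one, mul_zero]
  simp_rw [hS, BinaryForm.indicator_eq_ncard, mul_add, mul_sub, Finset.sum_add_distrib,
    Finset.sum_sub_distrib]
  refine congrArg₂ _ ?_ (congrArg₂ _ ?_ ?_)
  · rw [BinaryForm.sum_mul_ncard _ (fun x =>
      BinaryForm.IsApolar (a := 1 + 1) (b := 3) w (formMul x.rep x.rep)) ((p : ℂ) ^ 4)]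
    · congr 2
      refine Nat.card_congr (Equiv.subtypeEquivRight fun x => ⟨fun h => ?_, ?_⟩)
      · exact ⟨x.rep, x.rep_nonzero, x.mk_rep, h⟩
      · rintro ⟨l, hl, hx, h⟩
        exact (BinaryForm.isApolar_sq_mk_rep hl hx).mpr h
    · intro x
      rw [← BinaryForm.sum_stdAddChar_of_dvd (a := 1 + 1) (b := 3) w
        (BinaryForm.formMul_ne_zero (a := 1) (b := 1) x.rep_nonzero x.rep_nonzero)]
      refine Finset.sum_congr rfl fun v _ => if_congr ?_ rfl rfl
      rw [BinaryForm.toPoly_formMul, ← sq]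
      rfl
  · rw [BinaryForm.sum_mul_ncard _ (fun x =>
      BinaryForm.IsApolar (a := 2 + 2) (b := 1) w (formMul x.rep x.rep)) ((p : ℂ) ^ 2)]
    · congr 2
      refine Nat.card_congr (Equiv.subtypeEquivRight fun x => ⟨fun h => ?_, ?_⟩)
      · exact ⟨x.rep, x.rep_nonzero, x.mk_rep, h⟩
      · rintro ⟨l, hl, hx, h⟩
        exact (BinaryForm.isApolar_sq_mk_rep hl hx).mpr h
    · intro x
      rw [← BinaryForm.sum_stdAddChar_of_dvd (a := 2 + 2) (b := 1) w
        (BinaryForm.formMul_ne_zero (a := 2) (b := 2) x.rep_nonzero x.rep_nonzero)]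
      refine Finset.sum_congr rfl fun v _ => if_congr ?_ rfl rfl
      rw [BinaryForm.toPoly_formMul, ← sq]
      rfl
  · rw [BinaryForm.sum_mul_ncard _ (fun x => BinaryForm.IsApolar (a := 1 + 1 + (1 + 1)) (b := 1) w
      (formMul (a := 1 + 1) (b := 1 + 1) (formMul x.1.rep x.1.rep)
        (formMul x.2.rep x.2.rep))) ((p : ℂ) ^ 2)]
    · congr 2
      refine Nat.card_congr (Equiv.subtypeEquivRight fun x => ⟨fun h => ?_, ?_⟩)
      · exact ⟨x.1.rep, x.2.rep, x.1.rep_nonzero, x.2.rep_nonzero, x.1.mk_rep, x.2.mk_rep, h⟩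
      · rintro ⟨l, m, hl, hm, hx, hy, h⟩
        exact (BinaryForm.isApolar_mul_sq_mk_rep hl hm hx hy).mpr h
    · intro x
      rw [← BinaryForm.sum_stdAddChar_of_dvd (a := 1 + 1 + (1 + 1)) (b := 1) w
        (BinaryForm.formMul_ne_zero (a := 1 + 1) (b := 1 + 1)
          (BinaryForm.formMul_ne_zero (a := 1) (b := 1) x.1.rep_nonzero x.1.rep_nonzero)
          (BinaryForm.formMul_ne_zero (a := 1) (b := 1) x.2.rep_nonzero x.2.rep_nonzero))]
      refine Finset.sum_congr rfl fun v _ => if_congr ?_ rfl rfl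
      rw [BinaryForm.toPoly_formMul, BinaryForm.toPoly_formMul, BinaryForm.toPoly_formMul, ← sq,
        ← sq, ← mul_pow]
      rfl
end
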